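/- Let g = (g_1,…,g_m) be a tuple of polynomials in ℝ[X_1,…,X_n] such that S(g) is convex with nonempty interior and the quadratic module M(g) is Archimedean. Suppose that each g_i is strictly quasiconcave on S(g) ∩ Z(g_i) or is g-sos-concave. Then there is d ∈ ℕ₀ such that every polynomial f ∈ ℝ[X_1,…,X_n] of degree at most 1 with f ≥ 0 on S(g) lies in M_d(g). -/

import Mathlib

open MvPolynomial Matrix

noncomputable section

/-- `S(g) = {x ∈ ℝⁿ : g₁(x) ≥ 0, …, g_m(x) ≥ 0}`. -/
def SolSet {n m : ℕ} (g : Fin m → MvPolynomial (Fin n) ℝ) : Set (Fin n → ℝ) :=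
  {x | ∀ i, 0 ≤ eval x (g i)}

/-- The extended tuple `(g₀, g₁, …, g_m)` with `g₀ := 1`. -/
def withOne {n m : ℕ} (g : Fin m → MvPolynomial (Fin n) ℝ) :
    Fin (m + 1) → MvPolynomial (Fin n) ℝ :=
  Fin.cons 1 g

/-- A polynomial is a sum of squares. -/
def IsSOS {n : ℕ} (p : MvPolynomial (Fin n) ℝ) : Prop :=
  ∃ (l : ℕ) (q : Fin l → MvPolynomial (Fin n) ℝ), p = ∑ i, q i ^ 2

/-- The quadratic module `M(g)` generated by `g₁,…,g_m` (with `g₀ := 1`). -/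
def QM {n m : ℕ} (g : Fin m → MvPolynomial (Fin n) ℝ) : Set (MvPolynomial (Fin n) ℝ) :=
  {f | ∃ s : Fin (m + 1) → MvPolynomial (Fin n) ℝ,
    (∀ i, IsSOS (s i)) ∧ f = ∑ i, s i * withOne g i}

/-- A quadratic module is Archimedean if for every polynomial `p` there is `N ∈ ℕ`
with `N - p ∈ M`. -/
def IsArchimedeanQM {n : ℕ} (M : Set (MvPolynomial (Fin n) ℝ)) : Prop :=
  ∀ p : MvPolynomial (Fin n) ℝ, ∃ N : ℕ, (N : MvPolynomial (Fin n) ℝ) - p ∈ M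

/-- `p ∈ ℝ[X]_{r_i}` where `r_i = (d - deg g_i)/2` if `g_i ≠ 0` and `r_i = -∞` if `g_i = 0`:
either `p = 0`, or `g_i ≠ 0` and `2 deg p + deg g_i ≤ d`. -/
def DegOK {n : ℕ} (d : ℕ) (gi p : MvPolynomial (Fin n) ℝ) : Prop :=
  p = 0 ∨ (gi ≠ 0 ∧ 2 * p.totalDegree + gi.totalDegree ≤ d)

/-- The `d`-truncated `k×k` matricial quadratic module `M_d^{k×k}(g)`. -/
def MatTruncQM {n : ℕ} (d : ℕ) {m : ℕ} (g : Fin m → MvPolynomial (Fin n) ℝ) (k : ℕ) :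
    Set (Matrix (Fin k) (Fin k) (MvPolynomial (Fin n) ℝ)) :=
  {H | ∃ (N : ℕ) (P : Fin (m + 1) → Fin N → Matrix (Fin k) (Fin k) (MvPolynomial (Fin n) ℝ)),
    (∀ i j a b, DegOK d (withOne g i) (P i j a b)) ∧
    H = ∑ i, ∑ j, withOne g i • ((P i j)ᵀ * P i j)}


/-- The `d`-truncated quadratic module `M_d(g)`. -/
def TruncQM {n : ℕ} (d : ℕ) {m : ℕ} (g : Fin m → MvPolynomial (Fin n) ℝ) :
    Set (MvPolynomial (Fin n) ℝ) :=
  {f | ∃ (N : ℕ) (p : Fin (m + 1) → Fin N → MvPolynomial (Fin n) ℝ),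
    (∀ i j, DegOK d (withOne g i) (p i j)) ∧
    f = ∑ i, ∑ j, p i j ^ 2 * withOne g i}

/-- The degree `d` Lasserre relaxation `S_d(g)`: all `x ∈ ℝⁿ` admitting a linear functional
`L` on `ℝ[X]_d` with `L(1) = 1`, `L(X_i) = x_i` and `L ≥ 0` on `M_d(g)`. -/
def Lasserre {n : ℕ} (d : ℕ) {m : ℕ} (g : Fin m → MvPolynomial (Fin n) ℝ) :
    Set (Fin n → ℝ) :=
  {x | ∃ L : MvPolynomial.restrictTotalDegree (Fin n) ℝ d →ₗ[ℝ] ℝ,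
    (∀ p : MvPolynomial.restrictTotalDegree (Fin n) ℝ d,
      (p : MvPolynomial (Fin n) ℝ) = 1 → L p = 1) ∧
    (∀ i : Fin n, ∀ p : MvPolynomial.restrictTotalDegree (Fin n) ℝ d,
      (p : MvPolynomial (Fin n) ℝ) = X i → L p = x i) ∧
    (∀ p : MvPolynomial.restrictTotalDegree (Fin n) ℝ d,
      (p : MvPolynomial (Fin n) ℝ) ∈ TruncQM d g → 0 ≤ L p)}


/-- The real zero set `Z(p)` of a polynomial `p`. -/
def ZSet {n : ℕ} (p : MvPolynomial (Fin n) ℝ) : Set (Fin n → ℝ) :=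
  {x | eval x p = 0}

/-- The gradient `∇g(x)` of a polynomial `g` at a point `x`. -/
def gradEval {n : ℕ} (g : MvPolynomial (Fin n) ℝ) (x : Fin n → ℝ) : Fin n → ℝ :=
  fun i => eval x (pderiv i g)

/-- The Hessian `(Hess g)(x)` of a polynomial `g` at a point `x`. -/
def hessEval {n : ℕ} (g : MvPolynomial (Fin n) ℝ) (x : Fin n → ℝ) :
    Matrix (Fin n) (Fin n) ℝ :=
  Matrix.of fun i j => eval x (pderiv i (pderiv j g))

/-- `g` is strictly quasiconcave at `x`. -/
def StrictlyQuasiconcaveAt {n : ℕ} (g : MvPolynomial (Fin n) ℝ) (x : Fin n → ℝ) : Prop :=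
  ∀ v : Fin n → ℝ, v ≠ 0 → gradEval g x ⬝ᵥ v = 0 → v ⬝ᵥ (hessEval g x) *ᵥ v < 0

/-- `f` is `g`-sos-concave: `-Hess f ∈ M^{n×n}(g) = ⋃_d M_d^{n×n}(g)`. -/
def SosConcave {n m : ℕ} (g : Fin m → MvPolynomial (Fin n) ℝ)
    (f : MvPolynomial (Fin n) ℝ) : Prop :=
  ∃ d : ℕ,
    (Matrix.of fun a b => -(pderiv a (pderiv b f)) :
      Matrix (Fin n) (Fin n) (MvPolynomial (Fin n) ℝ)) ∈ MatTruncQM d g n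

/-!
At a minimizer `u` of `f` on `S(g)`, the Karush-Kuhn-Tucker conditions write `f` as `f(u)` plus a
nonnegative combination of the tangent forms `⟨∇gᵢ(u), X - u⟩` of the active constraints. So it
suffices to place these forms in `M_d(g)` with `d` independent of `u`. For this the point `u` is
replaced by a tuple `U` of variables: the polynomials in `ℝ[U][X]` whose specializations at the
points of `S(g)` lie in a common truncation of `M(g)` form an Archimedean quadratic module, to which
the scalar and matrix Positivstellensätze apply.

If `f` is concave on the segment from `U` to `X`, with certificates, then Taylor's formula, its
integral remainder written as a finite quadrature, puts `⟨∇f(U), X - U⟩ + f(U) - f(X)` in this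
module. A strictly quasiconcave `gᵢ` is replaced by a strictly concave polynomial with the same
first order behaviour on the zero set of `gᵢ`, whose Hessian the matrix Positivstellensatz
certifies. For a `g`-sos-concave `gᵢ` the certificates come from the values of the `gⱼ` along the
segment, which have to be shown to lie in the module. There the Positivstellensatz gives
`gⱼ - c gⱼ² + ε` for all `ε > 0`, and the error `ε` is removed in finitely many steps: integrating
the Hessian certificates along the segment trades it for multiples of the squares that they
involve, which are then absorbed one constraint at a time.
-/

section QuadraticModules

variable {A : Type*} [CommRing A] {Q : AddSubmonoid A}

/-- An abstract quadratic module of a commutative ring: an additive submonoid containing `1` and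
closed under multiplication by squares. -/
structure IsQuadraticModule (Q : AddSubmonoid A) : Prop where
  one_mem : 1 ∈ Q
  sq_mul_mem : ∀ (q : A) {a : A}, a ∈ Q → q ^ 2 * a ∈ Q

theorem isQuadraticModule_sumSq (A : Type*) [CommRing A] :
    IsQuadraticModule (AddSubmonoid.sumSq A) :=
  ⟨IsSumSq.one, fun q _ ha ↦ (IsSquare.sq q).isSumSq.mul (AddSubmonoid.mem_sumSq.1 ha)⟩

theorem isSumSq_map {R B F : Type*} [Semiring R] [Semiring B] [FunLike F R B] [RingHomClass F R B]
    (φ : F) {s : R} (hs : IsSumSq s) : IsSumSq (φ s) := by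
  induction hs with
  | zero => simp
  | sq_add a _ ih => simpa using ih.sq_add (φ a)

/-- The quadratic module obtained from `Q` by adjoining an element `a`, with sums of squares as
coefficients of `a`. -/
def adjoinElement (Q : AddSubmonoid A) (a : A) : AddSubmonoid A :=
  Q ⊔ (AddSubmonoid.sumSq A).map (AddMonoidHom.mulRight a)

theorem mem_adjoinElement {a x : A} :
    x ∈ adjoinElement Q a ↔ ∃ q ∈ Q, ∃ s, IsSumSq s ∧ q + s * a = x := by
  simp [adjoinElement, AddSubmonoid.mem_sup]

theorem le_adjoinElement (Q : AddSubmonoid A) (a : A) : Q ≤ adjoinElement Q a :=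
  le_sup_left

theorem self_mem_adjoinElement (Q : AddSubmonoid A) (a : A) : a ∈ adjoinElement Q a :=
  mem_adjoinElement.2 ⟨0, zero_mem Q, 1, by simp, by simp⟩

namespace IsQuadraticModule

theorem sq_mem (hQ : IsQuadraticModule Q) (q : A) : q ^ 2 ∈ Q := by
  simpa using hQ.sq_mul_mem q hQ.one_mem

theorem sumSq_mul_mem (hQ : IsQuadraticModule Q) {s a : A} (hs : IsSumSq s) (ha : a ∈ Q) :
    s * a ∈ Q := by
  induction hs with
  | zero => simp
  | sq_add b _ ih =>
    rw [add_mul, ← pow_two]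
    exact add_mem (hQ.sq_mul_mem b ha) ih

theorem adjoinElement (hQ : IsQuadraticModule Q) (a : A) :
    IsQuadraticModule (adjoinElement Q a) where
  one_mem := le_adjoinElement Q a hQ.one_mem
  sq_mul_mem q x hx := by
    obtain ⟨p, hp, s, hs, rfl⟩ := mem_adjoinElement.1 hx
    have hqs : IsSumSq (q ^ 2 * s) := (pow_two q ▸ IsSumSq.mul_self q).mul hs
    exact mem_adjoinElement.2 ⟨q ^ 2 * p, hQ.sq_mul_mem q hp, q ^ 2 * s, hqs, by ring⟩

theorem sSup_of_isChain {c : Set (AddSubmonoid A)} (hc : IsChain (· ≤ ·) c) (hne : c.Nonempty)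
    (hQ : ∀ P ∈ c, IsQuadraticModule P) : IsQuadraticModule (sSup c) := by
  have mem_iff {a : A} : a ∈ sSup c ↔ ∃ P ∈ c, a ∈ P :=
    AddSubmonoid.mem_sSup_of_directedOn hne hc.directedOn
  constructor
  · obtain ⟨P, hP⟩ := hne
    exact mem_iff.2 ⟨P, hP, (hQ P hP).one_mem⟩
  · intro q a ha
    obtain ⟨P, hP, haP⟩ := mem_iff.1 ha
    exact mem_iff.2 ⟨P, hP, (hQ P hP).sq_mul_mem q haP⟩

theorem exists_le_maximal (hQ : IsQuadraticModule Q) (hneg : -1 ∉ Q) :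
    ∃ M, Q ≤ M ∧ Maximal (fun P : AddSubmonoid A ↦ IsQuadraticModule P ∧ -1 ∉ P) M := by
  refine zorn_le_nonempty₀ {P : AddSubmonoid A | IsQuadraticModule P ∧ -1 ∉ P} ?_ Q ⟨hQ, hneg⟩
  intro c hc hchain P hP
  refine ⟨sSup c, ⟨sSup_of_isChain hchain ⟨P, hP⟩ fun P hP ↦ (hc hP).1, fun h ↦ ?_⟩,
    fun _ ↦ le_sSup⟩
  obtain ⟨P, hP, h1⟩ := (AddSubmonoid.mem_sSup_of_directedOn ⟨P, hP⟩ hchain.directedOn).1 h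
  exact (hc hP).2 h1

end IsQuadraticModule

variable [Algebra ℝ A]

/-- An Archimedean quadratic module of a real algebra: every element has a real upper bound
modulo `Q`. -/
structure IsArchimedeanModule (Q : AddSubmonoid A) : Prop extends IsQuadraticModule Q where
  exists_sub_mem : ∀ a : A, ∃ N : ℝ, algebraMap ℝ A N - a ∈ Q

/-- The characters of a real algebra that are nonnegative on `Q`; they play the role of the points
of the basic closed set defined by `Q`. -/
def positiveCharacters (Q : AddSubmonoid A) : Set (A →ₐ[ℝ] ℝ) :=
  {χ | ∀ a ∈ Q, 0 ≤ χ a}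

theorem IsArchimedeanModule.mono {P : AddSubmonoid A} (hQ : IsArchimedeanModule Q)
    (hP : IsQuadraticModule P) (hle : Q ≤ P) : IsArchimedeanModule P where
  toIsQuadraticModule := hP
  exists_sub_mem a := (hQ.exists_sub_mem a).imp fun _ h ↦ hle h

namespace IsQuadraticModule

theorem smul_mem (hQ : IsQuadraticModule Q) {c : ℝ} (hc : 0 ≤ c) {a : A} (ha : a ∈ Q) :
    c • a ∈ Q := by
  have h := hQ.sq_mul_mem (algebraMap ℝ A √c) ha
  rwa [← map_pow, Real.sq_sqrt hc, ← Algebra.smul_def] at h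

theorem algebraMap_mem (hQ : IsQuadraticModule Q) {c : ℝ} (hc : 0 ≤ c) :
    algebraMap ℝ A c ∈ Q := by
  rw [Algebra.algebraMap_eq_smul_one]
  exact hQ.smul_mem hc hQ.one_mem

theorem mem_of_smul_mem (hQ : IsQuadraticModule Q) {c : ℝ} (hc : 0 < c) {a : A}
    (ha : c • a ∈ Q) : a ∈ Q := by
  simpa [smul_smul, inv_mul_cancel₀ hc.ne'] using hQ.smul_mem (inv_nonneg.2 hc.le) ha

theorem nonneg_of_algebraMap_mem (hQ : IsQuadraticModule Q) (hneg : -1 ∉ Q) {c : ℝ}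
    (hc : algebraMap ℝ A c ∈ Q) : 0 ≤ c := by
  by_contra! hlt
  refine hneg (hQ.mem_of_smul_mem (neg_pos.2 hlt) ?_)
  simpa [Algebra.algebraMap_eq_smul_one] using hc

theorem sq_sub_sq_mem (hQ : IsQuadraticModule Q) {δ : ℝ} (hδ : 0 < δ) {a : A}
    (hadd : algebraMap ℝ A δ + a ∈ Q) (hsub : algebraMap ℝ A δ - a ∈ Q) :
    algebraMap ℝ A (δ ^ 2) - a ^ 2 ∈ Q := by
  refine hQ.mem_of_smul_mem (mul_pos two_pos hδ) ?_
  convert add_mem (hQ.sq_mul_mem (algebraMap ℝ A δ - a) hadd)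
    (hQ.sq_mul_mem (algebraMap ℝ A δ + a) hsub) using 1
  algebra

theorem sq_div_four_sub_mul_mem (hQ : IsQuadraticModule Q) {δ : ℝ} (hδ : 0 < δ) {a b : A}
    (hadd : algebraMap ℝ A δ + (a + b) ∈ Q) (hsub : algebraMap ℝ A δ - (a + b) ∈ Q) :
    algebraMap ℝ A (δ ^ 2 / 4) - a * b ∈ Q := by
  refine hQ.mem_of_smul_mem four_pos ?_
  convert add_mem (hQ.sq_sub_sq_mem hδ hadd hsub) (hQ.sq_mem (a - b)) using 1
  rw [smul_sub, Algebra.smul_def 4, ← map_mul, mul_div_cancel₀ _ four_ne_zero]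
  algebra

/-- The subalgebra of elements that are bounded with respect to a quadratic module. -/
def boundedElements (hQ : IsQuadraticModule Q) : Subalgebra ℝ A where
  carrier := {a | ∃ N : ℝ, 0 < N ∧ algebraMap ℝ A N + a ∈ Q ∧ algebraMap ℝ A N - a ∈ Q}
  algebraMap_mem' c := by
    refine ⟨|c| + 1, by positivity, ?_, ?_⟩
    · rw [← map_add]
      exact hQ.algebraMap_mem (by linarith [neg_le_abs c])
    · rw [← map_sub]
      exact hQ.algebraMap_mem (by linarith [le_abs_self c])
  add_mem' := by
    rintro a b ⟨N, hN, ha⟩ ⟨N', hN', hb⟩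
    refine ⟨N + N', add_pos hN hN', ?_, ?_⟩
    · convert add_mem ha.1 hb.1 using 1
      algebra
    · convert add_mem ha.2 hb.2 using 1
      algebra
  mul_mem' := by
    rintro a b ⟨N, hN, ha⟩ ⟨N', hN', hb⟩
    refine ⟨(N + N') ^ 2 / 4, by positivity, ?_, ?_⟩
    · rw [← sub_neg_eq_add, ← mul_neg]
      apply hQ.sq_div_four_sub_mul_mem (add_pos hN hN')
      · convert add_mem ha.1 hb.2 using 1
        algebra
      · convert add_mem ha.2 hb.1 using 1
        algebra
    · apply hQ.sq_div_four_sub_mul_mem (add_pos hN hN')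
      · convert add_mem ha.1 hb.1 using 1
        algebra
      · convert add_mem ha.2 hb.2 using 1
        algebra

theorem mem_boundedElements (hQ : IsQuadraticModule Q) {a : A} {N N' : ℝ}
    (hadd : algebraMap ℝ A N + a ∈ Q) (hsub : algebraMap ℝ A N' - a ∈ Q) :
    a ∈ hQ.boundedElements := by
  refine ⟨|N| + |N'| + 1, by positivity, ?_, ?_⟩
  · convert add_mem (hQ.algebraMap_mem (c := |N| + |N'| + 1 - N) ?_) hadd using 1
    · algebra
    · linarith [le_abs_self N, abs_nonneg N']
  · convert add_mem (hQ.algebraMap_mem (c := |N| + |N'| + 1 - N') ?_) hsub using 1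
    · algebra
    · linarith [le_abs_self N', abs_nonneg N]

theorem isArchimedeanModule_of_boundedElements_eq_top (hQ : IsQuadraticModule Q)
    (htop : hQ.boundedElements = ⊤) : IsArchimedeanModule Q where
  toIsQuadraticModule := hQ
  exists_sub_mem a := by
    obtain ⟨N, -, -, ha⟩ : a ∈ hQ.boundedElements := htop ▸ Algebra.mem_top
    exact ⟨N, ha⟩

theorem add_sub_inv_sq_mem (hQ : IsQuadraticModule Q) {f s : A} {k r : ℝ}
    (hk : 0 < k) (hr : 0 ≤ r) (hs : IsSumSq s) (hsf : s * f - 1 ∈ Q)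
    (hks : algebraMap ℝ A (2 * k) - s ∈ Q) (hksf : algebraMap ℝ A (2 * k) - (s ^ 2 * f + 1) ∈ Q)
    (hfr : f + algebraMap ℝ A r ∈ Q) : f + algebraMap ℝ A (r - (k ^ 2)⁻¹) ∈ Q := by
  refine hQ.mem_of_smul_mem (pow_pos hk 2) ?_
  have hkk : k ^ 2 * (k ^ 2)⁻¹ = 1 := mul_inv_cancel₀ (pow_pos hk 2).ne'
  have h : k ^ 2 • (f + algebraMap ℝ A (r - (k ^ 2)⁻¹)) =
      (algebraMap ℝ A k - s) ^ 2 * (f + algebraMap ℝ A r) + (2 * k) • (s * f - 1) +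
        (algebraMap ℝ A (2 * k) - (s ^ 2 * f + 1)) + r • (s * (algebraMap ℝ A (2 * k) - s)) := by
    rw [smul_add, Algebra.smul_def _ (algebraMap _ _ _), ← map_mul, mul_sub, hkk]
    algebra
  rw [h]
  exact add_mem (add_mem (add_mem (hQ.sq_mul_mem _ hfr) (hQ.smul_mem (by positivity) hsf)) hksf)
    (hQ.smul_mem hr (hQ.sumSq_mul_mem hs hks))

theorem mem_or_neg_mem_of_maximal {M : AddSubmonoid A}
    (hM : Maximal (fun P : AddSubmonoid A ↦ IsQuadraticModule P ∧ -1 ∉ P) M) (a : A) :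
    a ∈ M ∨ -a ∈ M := by
  have hQ := hM.prop.1
  have neg_one_eq (b : A) (hb : b ∉ M) : ∃ q ∈ M, ∃ s, IsSumSq s ∧ q + s * b = -1 := by
    rw [← mem_adjoinElement]
    by_contra h
    exact hb (hM.le_of_ge ⟨hQ.adjoinElement b, h⟩ (le_adjoinElement M b)
      (self_mem_adjoinElement M b))
  by_contra! ⟨ha, ha'⟩
  obtain ⟨q, hq, s, hs, hqs⟩ := neg_one_eq a ha
  obtain ⟨r, hr, t, ht, hrt⟩ := neg_one_eq (-a) ha'
  have hsM : s ∈ M := by simpa using hQ.sumSq_mul_mem hs hQ.one_mem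
  have hneg_s : -s ∈ M := by
    have : -s = t * 1 + (t * q + s * r) := by linear_combination -t * hqs - s * hrt
    rw [this]
    exact add_mem (hQ.sumSq_mul_mem ht hQ.one_mem)
      (add_mem (hQ.sumSq_mul_mem ht hq) (hQ.sumSq_mul_mem hs hr))
  -- The support `M ∩ -M` contains `s`, and it is an ideal.
  have hsa : s * a ∈ M := by
    have : s * a = (1 / 4 : ℝ) • ((a + 1) ^ 2 * s + (a - 1) ^ 2 * -s) := by algebra
    rw [this]
    exact hQ.smul_mem (by norm_num) (add_mem (hQ.sq_mul_mem _ hsM) (hQ.sq_mul_mem _ hneg_s))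
  exact hM.prop.2 (hqs ▸ add_mem hq hsa)

end IsQuadraticModule

namespace IsArchimedeanModule

theorem exists_pos_sub_mem (hQ : IsArchimedeanModule Q) (a : A) :
    ∃ N : ℝ, 0 < N ∧ algebraMap ℝ A N - a ∈ Q := by
  obtain ⟨N, hN⟩ := hQ.exists_sub_mem a
  refine ⟨max N 1, lt_max_of_lt_right one_pos, ?_⟩
  convert add_mem (hQ.algebraMap_mem (sub_nonneg.2 (le_max_left N 1))) hN using 1
  algebra

/-- The ideal of elements that are infinitesimal with respect to an Archimedean quadratic
module. -/
def infinitesimals (hQ : IsArchimedeanModule Q) : Ideal A where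
  carrier := {a | ∀ ε : ℝ, 0 < ε → algebraMap ℝ A ε + a ∈ Q ∧ algebraMap ℝ A ε - a ∈ Q}
  zero_mem' ε hε := by simpa using hQ.algebraMap_mem hε.le
  add_mem' {a b} ha hb ε hε := by
    have ha := ha (ε / 2) (by positivity)
    have hb := hb (ε / 2) (by positivity)
    constructor
    · convert add_mem ha.1 hb.1 using 1
      algebra
    · convert add_mem ha.2 hb.2 using 1
      algebra
  smul_mem' b a ha ε hε := by
    obtain ⟨N, hN, hb⟩ := hQ.exists_pos_sub_mem (b ^ 2)
    have hc : 0 < ε / N := div_pos hε hN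
    have hN_eq : N = ε / (ε / N) := by field_simp
    generalize ε / N = c at hc hN_eq
    have ha2 : algebraMap ℝ A (c * ε) - a ^ 2 ∈ Q := by
      have hpos : 0 < √(c * ε) := Real.sqrt_pos.2 (mul_pos hc hε)
      rw [← Real.sq_sqrt (mul_pos hc hε).le]
      exact hQ.sq_sub_sq_mem hpos (ha _ hpos).1 (ha _ hpos).2
    -- Completing the square in `(c b ± a) ^ 2` avoids multiplying elements of `Q`.
    have key (q : A) : (q ^ 2 + (c ^ 2 • (algebraMap ℝ A N - b ^ 2) +
        (algebraMap ℝ A (c * ε) - a ^ 2))) ∈ Q :=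
      add_mem (hQ.sq_mem q) (add_mem (hQ.smul_mem (sq_nonneg c) hb) ha2)
    have hcN : c * N = ε := by rw [hN_eq]; field_simp
    refine ⟨hQ.mem_of_smul_mem (mul_pos two_pos hc) ?_, hQ.mem_of_smul_mem (mul_pos two_pos hc) ?_⟩
    · convert key (c • b + a) using 1
      rw [← hcN, smul_eq_mul]
      algebra
    · convert key (c • b - a) using 1
      rw [← hcN, smul_eq_mul]
      algebra

theorem eq_zero_of_algebraMap_mem_infinitesimals (hQ : IsArchimedeanModule Q) (hneg : -1 ∉ Q)
    {r : ℝ} (hr : algebraMap ℝ A r ∈ hQ.infinitesimals) : r = 0 := by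
  refine abs_nonpos_iff.1 (le_of_forall_pos_le_add fun ε hε ↦ ?_)
  obtain ⟨hadd, hsub⟩ := hr ε hε
  rw [← map_add] at hadd
  rw [← map_sub] at hsub
  have := hQ.nonneg_of_algebraMap_mem hneg hadd
  have := hQ.nonneg_of_algebraMap_mem hneg hsub
  exact abs_le.2 ⟨by linarith, by linarith⟩

theorem exists_sub_mem_infinitesimals (hQ : IsArchimedeanModule Q) (hneg : -1 ∉ Q)
    (htotal : ∀ a, a ∈ Q ∨ -a ∈ Q) (a : A) :
    ∃ r : ℝ, a - algebraMap ℝ A r ∈ hQ.infinitesimals := by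
  set T : Set ℝ := {r | a - algebraMap ℝ A r ∈ Q}
  have hne : T.Nonempty := by
    obtain ⟨N, hN⟩ := hQ.exists_sub_mem (-a)
    refine ⟨-N, ?_⟩
    change a - algebraMap ℝ A (-N) ∈ Q
    convert hN using 1
    algebra
  have hbdd : BddAbove T := by
    obtain ⟨N, hN⟩ := hQ.exists_sub_mem a
    refine ⟨N, fun r hr ↦ sub_nonneg.1 (hQ.nonneg_of_algebraMap_mem hneg ?_)⟩
    convert add_mem hN hr using 1
    algebra
  refine ⟨sSup T, fun ε hε ↦ ⟨?_, ?_⟩⟩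
  · obtain ⟨r, hr, hlt⟩ := exists_lt_of_lt_csSup hne (sub_lt_self (sSup T) hε)
    convert add_mem (hQ.algebraMap_mem (sub_nonneg.2 hlt.le)) hr using 1
    algebra
  · have hnot : sSup T + ε ∉ T := fun h ↦ (le_csSup hbdd h).not_gt (lt_add_of_pos_right _ hε)
    convert (htotal _).resolve_left hnot using 1
    algebra

theorem exists_character_of_total (hQ : IsArchimedeanModule Q) (hneg : -1 ∉ Q)
    (htotal : ∀ a, a ∈ Q ∨ -a ∈ Q) : (positiveCharacters Q).Nonempty := by
  set I := hQ.infinitesimals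
  have hbij : Function.Bijective (Algebra.ofId ℝ (A ⧸ I)) := by
    constructor
    · rw [injective_iff_map_eq_zero]
      exact fun r hr ↦ hQ.eq_zero_of_algebraMap_mem_infinitesimals hneg
        (Ideal.Quotient.eq_zero_iff_mem.1 hr)
    · rintro ⟨a⟩
      obtain ⟨r, hr⟩ := hQ.exists_sub_mem_infinitesimals hneg htotal a
      exact ⟨r, (Ideal.Quotient.mk_eq_mk_iff_sub_mem _ _).2 hr |>.symm⟩
  set e := AlgEquiv.ofBijective (Algebra.ofId ℝ (A ⧸ I)) hbij
  refine ⟨e.symm.toAlgHom.comp (Ideal.Quotient.mkₐ ℝ I), fun a ha ↦ ?_⟩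
  set r := e.symm (Ideal.Quotient.mkₐ ℝ I a)
  have hr : a - algebraMap ℝ A r ∈ I :=
    (Ideal.Quotient.mk_eq_mk_iff_sub_mem _ _).1 (e.apply_symm_apply (Ideal.Quotient.mk I a)).symm
  refine le_of_forall_pos_le_add fun ε hε ↦ hQ.nonneg_of_algebraMap_mem hneg ?_
  convert add_mem ha (hr ε hε).2 using 1
  algebra

theorem exists_character (hQ : IsArchimedeanModule Q) (hneg : -1 ∉ Q) :
    (positiveCharacters Q).Nonempty := by
  obtain ⟨M, hle, hM⟩ := hQ.exists_le_maximal hneg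
  obtain ⟨χ, hχ⟩ := (hQ.mono hM.prop.1 hle).exists_character_of_total hM.prop.2
    (IsQuadraticModule.mem_or_neg_mem_of_maximal hM)
  exact ⟨χ, fun a ha ↦ hχ a (hle ha)⟩

theorem exists_sumSq_mul_sub_one_mem (hQ : IsArchimedeanModule Q) {f : A}
    (hf : ∀ χ ∈ positiveCharacters Q, 0 < χ f) : ∃ s, IsSumSq s ∧ s * f - 1 ∈ Q := by
  have hneg : -1 ∈ adjoinElement Q (-f) := by
    by_contra h
    obtain ⟨χ, hχ⟩ :=
      (hQ.mono (hQ.adjoinElement (-f)) (le_adjoinElement Q (-f))).exists_character h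
    have hpos := hf χ fun a ha ↦ hχ a (le_adjoinElement Q (-f) ha)
    have := hχ (-f) (self_mem_adjoinElement Q (-f))
    rw [map_neg] at this
    linarith
  obtain ⟨q, hq, s, hs, heq⟩ := mem_adjoinElement.1 hneg
  refine ⟨s, hs, ?_⟩
  convert hq using 1
  linear_combination -heq

/-- The Archimedean Positivstellensatz of Putinar and Jacobi. -/
theorem mem_of_forall_character_pos (hQ : IsArchimedeanModule Q) {f : A}
    (hf : ∀ χ ∈ positiveCharacters Q, 0 < χ f) : f ∈ Q := by
  have mem_of_le {a : A} {M N : ℝ} (hMN : M ≤ N) (ha : algebraMap ℝ A M - a ∈ Q) :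
      algebraMap ℝ A N - a ∈ Q := by
    convert add_mem (hQ.algebraMap_mem (sub_nonneg.2 hMN)) ha using 1
    algebra
  obtain ⟨s, hs, hsf⟩ := hQ.exists_sumSq_mul_sub_one_mem hf
  obtain ⟨N₁, hN₁⟩ := hQ.exists_sub_mem s
  obtain ⟨N₂, hN₂⟩ := hQ.exists_sub_mem (s ^ 2 * f + 1)
  obtain ⟨N, hN⟩ := hQ.exists_sub_mem (-f)
  obtain ⟨k, hk⟩ := exists_gt (max 0 (max N₁ N₂))
  obtain ⟨hk, hkN₁, hkN₂⟩ : 0 < k ∧ N₁ < k ∧ N₂ < k := by simpa only [max_lt_iff] using hk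
  have hks := mem_of_le (show N₁ ≤ 2 * k by linarith) hN₁
  have hksf := mem_of_le (show N₂ ≤ 2 * k by linarith) hN₂
  have descent (j : ℕ) : ∀ r : ℝ, r ≤ j * (k ^ 2)⁻¹ → f + algebraMap ℝ A r ∈ Q → f ∈ Q := by
    have of_nonpos {r : ℝ} (hr : r ≤ 0) (h : f + algebraMap ℝ A r ∈ Q) : f ∈ Q := by
      convert add_mem h (hQ.algebraMap_mem (neg_nonneg.2 hr)) using 1
      algebra
    induction j with
    | zero => exact fun r hr ↦ of_nonpos (by simpa using hr)
    | succ j ih =>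
      intro r hr h
      rcases le_total r 0 with hr0 | hr0
      · exact of_nonpos hr0 h
      · refine ih _ ?_ (hQ.add_sub_inv_sq_mem hk hr0 hs hsf hks hksf h)
        push_cast at hr
        linarith
  obtain ⟨j, hj⟩ := exists_nat_gt (N * k ^ 2)
  refine descent j N ?_ (by simpa [add_comm] using hN)
  rw [← div_eq_mul_inv, le_div_iff₀ (by positivity)]
  exact hj.le

end IsArchimedeanModule

end QuadraticModules

section MatrixPolynomials

open scoped MatrixOrder

variable {ι : Type*} [Fintype ι]

theorem abs_apply_le_of_abs_dotProduct_mulVec_le {M : Matrix ι ι ℝ} (hM : M.IsSymm) {τ : ℝ}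
    (h : ∀ v, |v ⬝ᵥ M *ᵥ v| ≤ τ * v ⬝ᵥ v) (i j : ι) : |M i j| ≤ τ := by
  classical
  set e : ι → ι → ℝ := fun i ↦ Pi.single i 1
  have polarization : (e i + e j) ⬝ᵥ M *ᵥ (e i + e j) - (e i - e j) ⬝ᵥ M *ᵥ (e i - e j) =
      4 * M i j := by
    simp [e, mulVec_add, mulVec_sub, dotProduct_add, dotProduct_sub]
    linear_combination 2 * hM.apply i j
  have parallelogram : (e i + e j) ⬝ᵥ (e i + e j) + (e i - e j) ⬝ᵥ (e i - e j) = 4 := by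
    simp only [add_dotProduct, sub_dotProduct, dotProduct_add, dotProduct_sub]
    simp [e]
    ring
  have hadd := abs_le.1 (h (e i + e j))
  have hsub := abs_le.1 (h (e i - e j))
  rw [abs_le]
  constructor <;> nlinarith

theorem dotProduct_mulVec_eq_sum {A : Type*} [CommRing A] (M : Matrix ι ι A) (v w : ι → A) :
    v ⬝ᵥ M *ᵥ w = ∑ i, ∑ j, v i * M i j * w j := by
  simp only [dotProduct, mulVec, Finset.mul_sum, mul_assoc]

theorem isSumSq_dotProduct_mulVec_of_nonneg {A : Type*} [CommRing A] [Algebra ℝ A]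
    {M : Matrix ι ι ℝ} (hM : 0 ≤ M) (w : ι → A) :
    IsSumSq (w ⬝ᵥ M.map (algebraMap ℝ A) *ᵥ w) := by
  classical
  obtain ⟨b, rfl⟩ := CStarAlgebra.nonneg_iff_eq_star_mul_self.1 hM
  have h : w ⬝ᵥ (star b * b).map (algebraMap ℝ A) *ᵥ w =
      ∑ i, (b.map (algebraMap ℝ A) *ᵥ w) i ^ 2 := by
    rw [star_eq_conjTranspose, conjTranspose_eq_transpose_of_trivial, Matrix.map_mul,
      ← mulVec_mulVec, transpose_map, mulVec_transpose, dotProduct_comm,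
      ← dotProduct_mulVec, dotProduct]
    simp only [sq]
  rw [h]
  exact .sum fun i _ ↦ (IsSquare.sq _).isSumSq

theorem exists_le_smul_of_posDef {κ : Type*} [Finite κ] [Nonempty κ] {M N : Matrix κ κ ℝ}
    (hM : M.PosDef) (hN : N.IsHermitian) : ∃ C > 0, N ≤ (C : ℝ) • M := by
  classical
  have := Fintype.ofFinite κ
  obtain ⟨r, hr, hrM⟩ := (CFC.exists_pos_algebraMap_le_iff hM.isHermitian).2
    fun _ ↦ hM.isStrictlyPositive.spectrum_pos
  obtain ⟨d, hd⟩ := (N.finite_real_spectrum).bddAbove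
  have hNd : N ≤ algebraMap ℝ _ (max d 1) :=
    (le_algebraMap_iff_spectrum_le).2 fun x hx ↦ (hd hx).trans (le_max_left _ _)
  have hd0 : 0 < max d 1 := by positivity
  refine ⟨max d 1 / r, div_pos hd0 hr, hNd.trans ?_⟩
  calc algebraMap ℝ (Matrix κ κ ℝ) (max d 1) = (max d 1 / r) • algebraMap ℝ _ r := by
        rw [Algebra.smul_def, ← map_mul, div_mul_cancel₀ _ hr.ne']
    _ ≤ (max d 1 / r) • M := smul_le_smul_of_nonneg_left hrM (div_pos hd0 hr).le

variable [DecidableEq ι]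

theorem algebraMap_le_matrix_iff {M : Matrix ι ι ℝ} {c : ℝ} :
    algebraMap ℝ (Matrix ι ι ℝ) c ≤ M ↔ M.IsSymm ∧ ∀ v, c * v ⬝ᵥ v ≤ v ⬝ᵥ M *ᵥ v := by
  have hsymm : (M - algebraMap ℝ (Matrix ι ι ℝ) c).IsHermitian ↔ M.IsSymm := by
    simp [Matrix.IsHermitian, Matrix.IsSymm, Algebra.algebraMap_eq_smul_one,
      conjTranspose_eq_transpose_of_trivial]
  rw [Matrix.le_iff, posSemidef_iff_dotProduct_mulVec, hsymm]
  simp [Algebra.algebraMap_eq_smul_one, sub_mulVec, smul_mulVec, dotProduct_sub]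

theorem matrix_le_algebraMap_iff {M : Matrix ι ι ℝ} {c : ℝ} :
    M ≤ algebraMap ℝ (Matrix ι ι ℝ) c ↔ M.IsSymm ∧ ∀ v, v ⬝ᵥ M *ᵥ v ≤ c * v ⬝ᵥ v := by
  have hsymm : (-M).IsSymm ↔ M.IsSymm := by simp [Matrix.IsSymm]
  rw [← neg_le_neg_iff, ← map_neg, algebraMap_le_matrix_iff, hsymm]
  simp [neg_mulVec]

theorem abs_aeval_apply_le {M : Matrix ι ι ℝ} {a b τ : ℝ}
    (ha : algebraMap ℝ (Matrix ι ι ℝ) a ≤ M) (hb : M ≤ algebraMap ℝ (Matrix ι ι ℝ) b)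
    {r : Polynomial ℝ} (hr : ∀ x ∈ Set.Icc a b, |r.eval x| ≤ τ) (i j : ι) :
    |Polynomial.aeval M r i j| ≤ τ := by
  have hM : IsSelfAdjoint M := (algebraMap_le_matrix_iff.1 ha)
    |>.1 |> isHermitian_iff_isSymm.2
  have hspec (x : ℝ) (hx : x ∈ spectrum ℝ M) : |r.eval x| ≤ τ :=
    hr x ⟨(algebraMap_le_iff_le_spectrum).1 ha x hx, (le_algebraMap_iff_spectrum_le).1 hb x hx⟩
  rw [← cfc_polynomial (R := ℝ) r M]
  obtain ⟨hsymm, hge⟩ := algebraMap_le_matrix_iff.1 <|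
    algebraMap_le_cfc r.eval (-τ) M fun x hx ↦ (abs_le.1 (hspec x hx)).1
  obtain ⟨-, hle⟩ := matrix_le_algebraMap_iff.1 <|
    cfc_le_algebraMap r.eval τ M fun x hx ↦ (abs_le.1 (hspec x hx)).2
  exact abs_apply_le_of_abs_dotProduct_mulVec_le hsymm
    (fun v ↦ abs_le.2 ⟨(neg_mul τ _).symm.trans_le (hge v), hle v⟩) i j

theorem exists_polynomial_sq_near_sub {a b c τ : ℝ} (hca : c ≤ a) (hτ : 0 < τ) :
    ∃ q : Polynomial ℝ, ∀ x ∈ Set.Icc a b, |x - c - q.eval x ^ 2| ≤ τ := by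
  set L := 2 * √(b - c) + 1
  have hL : 0 < L := by positivity
  obtain ⟨q, hq⟩ := exists_polynomial_near_of_continuousOn a b (fun x ↦ √(x - c))
    (by fun_prop) (min 1 (τ / L)) (lt_min one_pos (div_pos hτ hL))
  refine ⟨q, fun x hx ↦ ?_⟩
  obtain ⟨hnear_one, hnear⟩ := lt_min_iff.1 (hq x hx)
  have hsqrt : √(x - c) ≤ √(b - c) := Real.sqrt_le_sqrt (sub_le_sub_right hx.2 c)
  have hsum : |q.eval x + √(x - c)| ≤ L := by
    have := Real.sqrt_nonneg (x - c)
    grind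
  calc |x - c - q.eval x ^ 2|
      = |q.eval x - √(x - c)| * |q.eval x + √(x - c)| := by
        rw [← abs_mul, abs_sub_comm]
        congr 1
        linear_combination Real.sq_sqrt (sub_nonneg.2 (hca.trans hx.1))
    _ ≤ τ / L * L := by gcongr
    _ = τ := div_mul_cancel₀ τ hL.ne'

end MatrixPolynomials

section MatrixPositivstellensatz

variable {ι : Type*} [Fintype ι] {A : Type*} [CommRing A]

theorem dotProduct_mul_self_mulVec {M : Matrix ι ι A} (hM : M.IsSymm) (w : ι → A) :
    w ⬝ᵥ (M * M) *ᵥ w = ∑ i, (M *ᵥ w) i ^ 2 := by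
  rw [← mulVec_mulVec, dotProduct_mulVec, ← mulVec_transpose, hM.eq]
  simp [dotProduct, pow_two]

variable [Algebra ℝ A] {Q : AddSubmonoid A}

theorem isSymm_aeval [DecidableEq ι] {M : Matrix ι ι A} (hM : M.IsSymm) (q : Polynomial ℝ) :
    (Polynomial.aeval M q).IsSymm := by
  simp only [Matrix.IsSymm, Polynomial.aeval_eq_sum_range, transpose_sum, transpose_smul,
    transpose_pow, hM.eq]

namespace IsArchimedeanModule

theorem exists_forall_abs_character_lt (hQ : IsArchimedeanModule Q) (a : A) :
    ∃ N : ℝ, ∀ χ ∈ positiveCharacters Q, |χ a| < N := by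
  obtain ⟨N₁, hN₁⟩ := hQ.exists_sub_mem a
  obtain ⟨N₂, hN₂⟩ := hQ.exists_sub_mem (-a)
  refine ⟨max N₁ N₂ + 1, fun χ hχ ↦ ?_⟩
  have h₁ := hχ _ hN₁
  have h₂ := hχ _ hN₂
  simp only [map_sub, map_neg, AlgHomClass.commutes, Algebra.algebraMap_self,
    RingHom.id_apply] at h₁ h₂
  grind

theorem smul_dotProduct_add_dotProduct_mulVec_mem (hQ : IsArchimedeanModule Q)
    {E : Matrix ι ι A} {c : ℝ} (hE : ∀ χ ∈ positiveCharacters Q, ∀ i j, |χ (E i j)| < c)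
    (w : ι → A) : (Fintype.card ι * c) • (w ⬝ᵥ w) + w ⬝ᵥ E *ᵥ w ∈ Q := by
  have hentry (i j : ι) :
      (c / 2) • (w i ^ 2 + w j ^ 2) + w i * E i j * w j ∈ Q := by
    have hadd : algebraMap ℝ A c + E i j ∈ Q := hQ.mem_of_forall_character_pos fun χ hχ ↦ by
      simpa [← neg_lt_iff_pos_add'] using (abs_lt.1 (hE χ hχ i j)).1
    have hsub : algebraMap ℝ A c - E i j ∈ Q := hQ.mem_of_forall_character_pos fun χ hχ ↦ by
      simpa using (abs_lt.1 (hE χ hχ i j)).2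
    refine hQ.mem_of_smul_mem zero_lt_four ?_
    convert add_mem (hQ.sq_mul_mem (w i + w j) hadd) (hQ.sq_mul_mem (w i - w j) hsub) using 1
    algebra
  convert sum_mem (t := Finset.univ) fun i _ ↦ sum_mem (t := Finset.univ) fun j _ ↦ hentry i j
    using 1
  simp only [Finset.sum_add_distrib, ← Finset.smul_sum, Finset.sum_const, Finset.card_univ,
    dotProduct, mulVec, Finset.mul_sum, mul_assoc, ← pow_two, ← Nat.cast_smul_eq_nsmul ℝ]
  algebra

theorem exists_forall_character_dotProduct_mulVec_le (hQ : IsArchimedeanModule Q)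
    (H : Matrix ι ι A) :
    ∃ N : ℝ, ∀ χ ∈ positiveCharacters Q, ∀ v, v ⬝ᵥ H.map χ *ᵥ v ≤ N * v ⬝ᵥ v := by
  choose N hN using fun p : ι × ι ↦ hQ.exists_forall_abs_character_lt (-H p.1 p.2)
  obtain ⟨c, hc⟩ := Finite.exists_le N
  refine ⟨Fintype.card ι * c, fun χ hχ v ↦ ?_⟩
  have := hχ _ (hQ.smul_dotProduct_add_dotProduct_mulVec_mem (E := -H) (c := c)
    (fun χ hχ i j ↦ (hN (i, j) χ hχ).trans_le (hc (i, j))) (algebraMap ℝ A ∘ v))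
  have hquad (M : Matrix ι ι A) : χ ((algebraMap ℝ A ∘ v) ⬝ᵥ M *ᵥ (algebraMap ℝ A ∘ v)) =
      v ⬝ᵥ M.map χ *ᵥ v := by
    simp [dotProduct, mulVec]
  have hsq : χ ((algebraMap ℝ A ∘ v) ⬝ᵥ (algebraMap ℝ A ∘ v)) = v ⬝ᵥ v := by
    simp [dotProduct]
  rw [map_add, map_smul, hquad, hsq, smul_eq_mul, Matrix.map_neg _ (map_neg χ), neg_mulVec,
    dotProduct_neg] at this
  linarith

/-- A matrix version of the Archimedean Positivstellensatz. -/
theorem dotProduct_mulVec_mem (hQ : IsArchimedeanModule Q) {H : Matrix ι ι A} (hH : H.IsSymm)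
    {δ : ℝ} (hδ : 0 < δ)
    (hpos : ∀ χ ∈ positiveCharacters Q, ∀ v, δ * v ⬝ᵥ v ≤ v ⬝ᵥ H.map χ *ᵥ v) (w : ι → A) :
    w ⬝ᵥ H *ᵥ w ∈ Q := by
  classical
  obtain ⟨N, hN⟩ := hQ.exists_forall_character_dotProduct_mulVec_le H
  set c : ℝ := δ / (2 * (Fintype.card ι + 1))
  have hc : 0 < c := by positivity
  have hcard : Fintype.card ι * c ≤ δ := by
    rw [mul_div_assoc', div_le_iff₀ (by positivity)]
    nlinarith [(Fintype.card ι).cast_nonneg (α := ℝ)]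
  obtain ⟨q, hq⟩ := exists_polynomial_sq_near_sub (a := δ) (b := N) hcard (half_pos hc)
  set r : Polynomial ℝ := .X - .C (Fintype.card ι * c) - q ^ 2
  set R := Polynomial.aeval H q
  have hr (χ) (hχ : χ ∈ positiveCharacters Q) (i j : ι) : |χ (Polynomial.aeval H r i j)| < c := by
    have hmap : (Polynomial.aeval H r).map χ = Polynomial.aeval (H.map χ) r :=
      (Polynomial.aeval_algHom_apply χ.mapMatrix H r).symm
    rw [← Matrix.map_apply (f := χ), hmap]
    have hsymm : (H.map χ).IsSymm := hH.map χ
    exact (abs_aeval_apply_le (algebraMap_le_matrix_iff.2 ⟨hsymm, hpos χ hχ⟩)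
      (matrix_le_algebraMap_iff.2 ⟨hsymm, hN χ hχ⟩) (by simpa [r] using hq) i j).trans_lt
      (half_lt_self hc)
  have hsq : w ⬝ᵥ H *ᵥ w = (Fintype.card ι * c) • (w ⬝ᵥ w) + w ⬝ᵥ Polynomial.aeval H r *ᵥ w +
      ∑ i, (R *ᵥ w) i ^ 2 := by
    rw [← dotProduct_mul_self_mulVec (isSymm_aeval hH q), map_sub, map_sub, map_pow,
      Polynomial.aeval_X, Polynomial.aeval_C,
      Algebra.algebraMap_eq_smul_one, sub_mulVec, sub_mulVec, smul_mulVec, one_mulVec,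
      dotProduct_sub, dotProduct_sub, dotProduct_smul, pow_two]
    abel
  rw [hsq]
  exact add_mem (hQ.smul_dotProduct_add_dotProduct_mulVec_mem hr w)
    (sum_mem fun i _ ↦ hQ.sq_mem _)

end IsArchimedeanModule

end MatrixPositivstellensatz

section ConvexHull

theorem convexHull_range_eq_image_stdSimplex {ι E : Type*} [Fintype ι] [AddCommGroup E]
    [Module ℝ E] (f : ι → E) :
    convexHull ℝ (Set.range f) = (fun w : ι → ℝ ↦ ∑ i, w i • f i) '' stdSimplex ℝ ι := by
  classical
  rw [← convexHull_basis_eq_stdSimplex]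
  change _ = Fintype.linearCombination ℝ f '' _
  rw [LinearMap.image_convexHull, ← Set.range_comp]
  congr 2
  ext i
  simp [Fintype.linearCombination_apply]

theorem exists_range_of_mem_convexHull {E : Type*} [AddCommGroup E] [Module ℝ E]
    [FiniteDimensional ℝ E] {K : Set E} {x : E} (hx : x ∈ convexHull ℝ K) :
    ∃ f : Fin (Module.finrank ℝ E + 1) → E, (∀ i, f i ∈ K) ∧ x ∈ convexHull ℝ (Set.range f) := by
  rw [convexHull_eq_union] at hx
  simp only [Set.mem_iUnion] at hx
  obtain ⟨t, htK, hindep, hxt⟩ := hx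
  have hcard : t.card ≤ Module.finrank ℝ E + 1 := by
    simpa using hindep.card_le_finrank_succ.trans
      (Nat.add_le_add_right (Submodule.finrank_le _) 1)
  have : Nonempty t := (Finset.coe_nonempty.1 (convexHull_nonempty_iff.1 ⟨x, hxt⟩)).to_subtype
  obtain ⟨f, hf⟩ : ∃ f : Fin (Module.finrank ℝ E + 1) → t, Function.Surjective f := by
    obtain ⟨e⟩ := Function.Embedding.nonempty_of_card_le
      (α := t) (β := Fin (Module.finrank ℝ E + 1)) (by simpa using hcard)
    exact ⟨_, Function.invFun_surjective e.injective⟩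
  refine ⟨Subtype.val ∘ f, fun i ↦ htK (f i).2, ?_⟩
  rwa [hf.range_comp, Subtype.range_coe]

theorem isCompact_convexHull {E : Type*} [NormedAddCommGroup E] [NormedSpace ℝ E]
    [FiniteDimensional ℝ E] {K : Set E} (hK : IsCompact K) : IsCompact (convexHull ℝ K) := by
  set ι := Fin (Module.finrank ℝ E + 1)
  have himage : convexHull ℝ K = (fun p : (ι → ℝ) × (ι → E) ↦ ∑ i, p.1 i • p.2 i) ''
      (stdSimplex ℝ ι ×ˢ Set.univ.pi fun _ ↦ K) := by
    ext x
    constructor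
    · intro hx
      obtain ⟨f, hf, hx⟩ := exists_range_of_mem_convexHull hx
      rw [convexHull_range_eq_image_stdSimplex] at hx
      obtain ⟨w, hw, rfl⟩ := hx
      exact ⟨(w, f), ⟨hw, fun i _ ↦ hf i⟩, rfl⟩
    · rintro ⟨⟨w, f⟩, ⟨hw, hf⟩, rfl⟩
      exact (convex_convexHull ℝ K).sum_mem (fun i _ ↦ hw.1 i) hw.2
        fun i _ ↦ subset_convexHull ℝ K (hf i trivial)
  rw [himage]
  exact ((isCompact_stdSimplex ℝ ι).prod (isCompact_univ_pi fun _ ↦ hK)).image (by fun_prop)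

end ConvexHull

section NodalMeasures

open scoped Polynomial
open Polynomial (derivative derivative_mul derivative_comp derivative_monomial)

/-- A positive measure on `[0, 1]` supported on finitely many nodes. It is a finite substitute for
integration over `[0, 1]` of polynomials with coefficients in an arbitrary `ℝ`-algebra. -/
structure NodalMeasure where
  ι : Type
  [fintype : Fintype ι]
  node : ι → ℝ
  weight : ι → ℝ
  node_mem : ∀ i, node i ∈ Set.Icc 0 1
  weight_nonneg : ∀ i, 0 ≤ weight i

attribute [instance] NodalMeasure.fintype

namespace NodalMeasure

variable {A : Type*} [CommRing A] [Algebra ℝ A] (μ : NodalMeasure) {D E : ℕ}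

/-- The integral of a polynomial with coefficients in `A` against a nodal measure. -/
def integral : A[X] →ₗ[A] A :=
  ∑ i, algebraMap ℝ A (μ.weight i) • Polynomial.leval (algebraMap ℝ A (μ.node i))

theorem integral_apply (P : A[X]) :
    μ.integral P = ∑ i, μ.weight i • P.eval (algebraMap ℝ A (μ.node i)) := by
  simp [integral, Polynomial.leval_apply, Algebra.smul_def]

/-- A nodal measure whose integral agrees with that of Lebesgue measure on `[0, 1]` up to
degree `D`. -/
def IsQuadrature (D : ℕ) : Prop :=
  ∀ i ≤ D, ∑ k, μ.weight k * μ.node k ^ i = 1 / (i + 1 : ℝ)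

theorem exists_isQuadrature (D : ℕ) : ∃ μ : NodalMeasure, μ.IsQuadrature D := by
  let γ : ℝ → Fin (D + 1) → ℝ := fun s i ↦ s ^ (i : ℕ)
  have hγ : Continuous γ := by fun_prop
  let lebesgue := MeasureTheory.volume.restrict (Set.Icc (0 : ℝ) 1)
  have : MeasureTheory.IsProbabilityMeasure lebesgue := ⟨by simp [lebesgue]⟩
  have hbarycenter : ∫ s, γ s ∂lebesgue ∈ convexHull ℝ (γ '' Set.Icc 0 1) :=
    (convex_convexHull ℝ _).integral_mem (isCompact_convexHull (isCompact_Icc.image hγ)).isClosed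
      ((MeasureTheory.ae_restrict_iff' measurableSet_Icc).2
        (.of_forall fun s hs ↦ subset_convexHull ℝ _ ⟨s, hs, rfl⟩))
      hγ.continuousOn.integrableOn_Icc
  obtain ⟨f, hf, hmem⟩ := exists_range_of_mem_convexHull hbarycenter
  rw [convexHull_range_eq_image_stdSimplex] at hmem
  obtain ⟨w, hw, hsum⟩ := hmem
  choose r hr hrf using hf
  refine ⟨⟨_, r, w, hr, hw.1⟩, fun i hi ↦ ?_⟩
  calc ∑ k, w k * r k ^ i = (∫ s, γ s ∂lebesgue) ⟨i, by lia⟩ := by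
        simp [← hsum, ← hrf, γ]
    _ = ∫ s in (0 : ℝ)..1, s ^ i := by
        rw [MeasureTheory.eval_integral
            fun i ↦ (by fun_prop : Continuous fun s ↦ γ s i).continuousOn.integrableOn_Icc,
          MeasureTheory.integral_Icc_eq_integral_Ioc, intervalIntegral.integral_of_le zero_le_one]
    _ = 1 / (i + 1) := by simp

variable {μ}

theorem IsQuadrature.integral_monomial (hμ : μ.IsQuadrature D) {i : ℕ} (hi : i ≤ D) (a : A) :
    μ.integral (Polynomial.monomial i a) = (1 / (i + 1 : ℝ)) • a := by
  rw [← hμ i hi, integral_apply, Finset.sum_smul]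
  refine Finset.sum_congr rfl fun k _ ↦ ?_
  rw [Polynomial.eval_monomial, mul_comm a, ← map_pow, ← Algebra.smul_def, smul_smul]

theorem IsQuadrature.integral_derivative (hμ : μ.IsQuadrature D) {P : A[X]}
    (hP : P.natDegree ≤ D + 1) : μ.integral (derivative P) = P.eval 1 - P.eval 0 := by
  rw [P.as_sum_range' (D + 2) (by lia)]
  simp only [map_sum, Polynomial.eval_finsetSum, ← Finset.sum_sub_distrib]
  refine Finset.sum_congr rfl fun i hi ↦ ?_
  rcases i with _ | i
  · simp
  · rw [derivative_monomial, Nat.add_sub_cancel,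
      hμ.integral_monomial (by simp at hi; lia)]
    have : (((i + 1 : ℕ) : A)) = algebraMap ℝ A (i + 1) := by simp
    rw [this, mul_comm, ← Algebra.smul_def, smul_smul, one_div_mul_cancel (by positivity)]
    simp

theorem IsQuadrature.integral_eq_intervalIntegral (hμ : μ.IsQuadrature D) {P : ℝ[X]}
    (hP : P.natDegree ≤ D) : μ.integral P = ∫ s in (0 : ℝ)..1, P.eval s := by
  simp only [Polynomial.eval_eq_sum_range' (n := D + 1) (by lia : P.natDegree < D + 1)]
  rw [intervalIntegral.integral_finsetSum fun i _ ↦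
      (by fun_prop : Continuous fun s : ℝ ↦ P.coeff i * s ^ i).intervalIntegrable _ _]
  conv_lhs => rw [P.as_sum_range' (D + 1) (by lia), map_sum]
  refine Finset.sum_congr rfl fun i hi ↦ ?_
  rw [hμ.integral_monomial (by simp at hi; lia)]
  simp [mul_comm]

theorem IsQuadrature.integral_pos (hμ : μ.IsQuadrature D) {P : ℝ[X]} (hdeg : P.natDegree ≤ D)
    (hne : P ≠ 0) (hP : ∀ s ∈ Set.Icc (0 : ℝ) 1, 0 ≤ P.eval s) : 0 < μ.integral P := by
  obtain ⟨s, hs, hroot⟩ := (Set.Icc_infinite (zero_lt_one' ℝ)).exists_notMem_finite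
    (P.finite_setOfPred_isRoot hne)
  rw [hμ.integral_eq_intervalIntegral hdeg]
  exact intervalIntegral.integral_pos one_pos P.continuous.continuousOn
    (fun x hx ↦ hP x (Set.Ioc_subset_Icc_self hx)) ⟨s, hs, (hP s hs).lt_of_ne' hroot⟩

theorem IsQuadrature.integral_taylor (hμ : μ.IsQuadrature D) {F : A[X]} (hF : F.natDegree ≤ D) :
    μ.integral ((1 - Polynomial.X) * -derivative (derivative F)) =
      (derivative F).eval 0 + F.eval 0 - F.eval 1 := by
  have hdeg : (-((1 - Polynomial.X) * derivative F + F)).natDegree ≤ D + 1 := by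
    have := Polynomial.natDegree_derivative_le F
    compute_degree
    lia
  convert hμ.integral_derivative hdeg using 1
  · congr 1
    simp [derivative_mul]
  · simp
    ring

/-- The nodal measure representing, against `-F''`, the defect of `F t` from the chord of `F`
through `0` and `1`; see `NodalMeasure.IsQuadrature.eval_eq_chord`. -/
def chord (μ : NodalMeasure) (t : unitInterval) : NodalMeasure where
  ι := μ.ι ⊕ μ.ι
  node := Sum.elim (fun i ↦ t * μ.node i) fun i ↦ 1 - (1 - t) * μ.node i
  weight := Sum.elim (fun i ↦ μ.weight i * μ.node i * t) fun i ↦ μ.weight i * μ.node i * (1 - t)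
  node_mem := by
    rintro (i | i)
    · exact unitInterval.mul_mem t.2 (μ.node_mem i)
    · exact Set.Icc.mem_iff_one_sub_mem.1
        (unitInterval.mul_mem (Set.Icc.mem_iff_one_sub_mem.1 t.2) (μ.node_mem i))
  weight_nonneg := by
    rintro (i | i)
    · exact mul_nonneg (mul_nonneg (μ.weight_nonneg i) (μ.node_mem i).1) t.2.1
    · exact mul_nonneg (mul_nonneg (μ.weight_nonneg i) (μ.node_mem i).1)
        (unitInterval.one_minus_nonneg t)

theorem integral_chord (t : unitInterval) (P : A[X]) :
    (μ.chord t).integral P = μ.integral (Polynomial.X *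
      (Polynomial.C (algebraMap ℝ A t) * P.comp (Polynomial.C (algebraMap ℝ A t) * Polynomial.X) +
        Polynomial.C (1 - algebraMap ℝ A t) *
          P.comp (1 - Polynomial.C (1 - algebraMap ℝ A t) * Polynomial.X))) := by
  simp only [integral_apply, chord, Fintype.sum_sum_type, Sum.elim_inl, Sum.elim_inr,
    ← Finset.sum_add_distrib]
  refine Finset.sum_congr rfl fun i _ ↦ ?_
  simp [Algebra.smul_def]
  ring

theorem IsQuadrature.eval_eq_chord (hμ : μ.IsQuadrature D) {F : A[X]} (hF : F.natDegree ≤ D)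
    (t : unitInterval) :
    F.eval (algebraMap ℝ A t) = (1 - t : ℝ) • F.eval 0 + (t : ℝ) • F.eval 1 +
      (t * (1 - t) : ℝ) • (μ.chord t).integral (-derivative (derivative F)) := by
  set a := algebraMap ℝ A t
  have hcomp (q : A[X]) (hq : q.natDegree ≤ 1) : (F.comp q).natDegree ≤ D :=
    Polynomial.natDegree_comp_le.trans ((Nat.mul_le_mul hF hq).trans (by simp))
  set P : A[X] := Polynomial.C (1 - a) * F.comp (Polynomial.C a * Polynomial.X) +
    Polynomial.C a * F.comp (1 - Polynomial.C (1 - a) * Polynomial.X) with hP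
  have hdeg : (P - Polynomial.X * derivative P).natDegree ≤ D + 1 := by
    have hPdeg : P.natDegree ≤ D := (Polynomial.natDegree_add_le _ _).trans <| max_le
      ((Polynomial.natDegree_C_mul_le _ _).trans (hcomp _ (by compute_degree)))
      ((Polynomial.natDegree_C_mul_le _ _).trans (hcomp _ (by compute_degree)))
    have := Polynomial.natDegree_derivative_le P
    compute_degree
    lia
  have hint := hμ.integral_derivative hdeg
  have hderiv : derivative (P - Polynomial.X * derivative P) =
      Polynomial.C (algebraMap ℝ A (t * (1 - t))) * (Polynomial.X *
        (Polynomial.C a * (-derivative (derivative F)).comp (Polynomial.C a * Polynomial.X) +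
          Polynomial.C (1 - a) *
            (-derivative (derivative F)).comp (1 - Polynomial.C (1 - a) * Polynomial.X))) := by
    simp [hP, derivative_mul, derivative_comp, a]
    ring
  rw [hderiv, Polynomial.C_mul', map_smul, algebraMap_smul] at hint
  rw [integral_chord, hint]
  simp [hP, derivative_mul, derivative_comp, a, Algebra.smul_def]
  ring

/-- The nodal measure with density `r (1 - r)`. -/
def bubble (μ : NodalMeasure) : NodalMeasure where
  ι := μ.ι
  node := μ.node
  weight i := μ.node i * (1 - μ.node i) * μ.weight i
  node_mem := μ.node_mem
  weight_nonneg i := mul_nonneg (mul_nonneg (μ.node_mem i).1 (sub_nonneg.2 (μ.node_mem i).2))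
    (μ.weight_nonneg i)

theorem integral_bubble (P : A[X]) :
    μ.bubble.integral P = μ.integral (Polynomial.X * (1 - Polynomial.X) * P) := by
  simp only [integral_apply, bubble]
  refine Finset.sum_congr rfl fun i _ ↦ ?_
  simp [Algebra.smul_def]
  ring

theorem integral_mem {Q : AddSubmonoid A} (hQ : IsQuadraticModule Q) {P : A[X]}
    (hP : ∀ s : unitInterval, P.eval (algebraMap ℝ A s) ∈ Q) : μ.integral P ∈ Q := by
  rw [integral_apply]
  exact Q.sum_mem fun i _ ↦ hQ.smul_mem (μ.weight_nonneg i) (hP ⟨_, μ.node_mem i⟩)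

theorem integral_nonneg {P : ℝ[X]} (hP : ∀ s : unitInterval, 0 ≤ P.eval (s : ℝ)) :
    0 ≤ μ.integral P := by
  rw [integral_apply]
  exact Finset.sum_nonneg fun i _ ↦ mul_nonneg (μ.weight_nonneg i) (hP ⟨_, μ.node_mem i⟩)

theorem isSumSq_integral_sq (μ : NodalMeasure) (P : A[X]) : IsSumSq (μ.integral (P ^ 2)) := by
  have hsumSq := isQuadraticModule_sumSq A
  refine AddSubmonoid.mem_sumSq.1 (integral_mem hsumSq fun s ↦ ?_)
  rw [Polynomial.eval_pow]
  exact hsumSq.sq_mem _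

/-- The quadratic form `P ↦ ∫ P ^ 2` is positive definite on real polynomials of degree at
most `E`. -/
def IsPosDef (μ : NodalMeasure) (E : ℕ) : Prop :=
  ∀ P : ℝ[X], P.natDegree ≤ E → P ≠ 0 → 0 < μ.integral (P ^ 2)

theorem IsQuadrature.isPosDef_bubble (hμ : μ.IsQuadrature D) (hE : 2 * E + 2 ≤ D) :
    μ.bubble.IsPosDef E := by
  intro P hP hne
  rw [integral_bubble]
  refine hμ.integral_pos ?_ ?_ fun s hs ↦ ?_
  · compute_degree
    lia
  · refine mul_ne_zero (mul_ne_zero Polynomial.X_ne_zero ?_) (pow_ne_zero 2 hne)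
    rw [← neg_ne_zero, neg_sub]
    exact Polynomial.X_sub_C_ne_zero 1
  · have := mul_nonneg hs.1 (sub_nonneg.2 hs.2)
    simp only [Polynomial.eval_mul, Polynomial.eval_sub, Polynomial.eval_one, Polynomial.eval_X,
      Polynomial.eval_pow]
    positivity

theorem IsQuadrature.isPosDef_chord (hμ : μ.IsQuadrature D) (hE : 2 * E + 1 ≤ D)
    {t : unitInterval} (ht : 0 < t) : (μ.chord t).IsPosDef E := by
  intro P hP hne
  have hdeg (q : ℝ[X]) (hq : q.natDegree ≤ 1) :
      (Polynomial.X * (P ^ 2).comp q).natDegree ≤ D := by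
    have hsq : (P ^ 2).natDegree ≤ 2 * E := by compute_degree; lia
    have hcomp : ((P ^ 2).comp q).natDegree ≤ 2 * E * 1 :=
      Polynomial.natDegree_comp_le.trans (Nat.mul_le_mul hsq hq)
    exact Polynomial.natDegree_mul_le.trans (by rw [Polynomial.natDegree_X]; lia)
  have ht' : (0 : ℝ) < t := ht
  set near := Polynomial.X * (P ^ 2).comp (Polynomial.C (t : ℝ) * Polynomial.X)
  set far := Polynomial.X * (P ^ 2).comp (1 - Polynomial.C (1 - t : ℝ) * Polynomial.X)
  have hnear : 0 < μ.integral near := by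
    refine hμ.integral_pos (hdeg _ (by compute_degree)) ?_ fun s hs ↦ ?_
    · rw [mul_ne_zero_iff, Ne, Ne,
        Polynomial.comp_C_mul_X_eq_zero_iff (mem_nonZeroDivisors_of_ne_zero ht'.ne')]
      exact ⟨Polynomial.X_ne_zero, pow_ne_zero 2 hne⟩
    · have := hs.1
      simp only [near, Polynomial.eval_mul, Polynomial.eval_X, Polynomial.pow_comp,
        Polynomial.eval_pow]
      positivity
  have hfar : 0 ≤ μ.integral far := integral_nonneg fun s ↦ by
    have := s.2.1
    simp only [far, Polynomial.eval_mul, Polynomial.eval_X, Polynomial.pow_comp,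
      Polynomial.eval_pow]
    positivity
  have hsplit : (μ.chord t).integral (P ^ 2) =
      t * μ.integral near + (1 - t) * μ.integral far := by
    rw [integral_chord, ← smul_eq_mul (t : ℝ), ← smul_eq_mul (1 - t : ℝ),
      ← map_smul μ.integral (t : ℝ), ← map_smul μ.integral (1 - t : ℝ), ← map_add]
    congr 1
    simp only [near, far, Polynomial.smul_eq_C_mul, Algebra.algebraMap_self, RingHom.id_apply]
    ring
  rw [hsplit]
  exact add_pos_of_pos_of_nonneg (mul_pos ht' hnear)
    (mul_nonneg (unitInterval.one_minus_nonneg t) hfar)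

open scoped MatrixOrder

/-- The matrix of the quadratic form `P ↦ ∫ P ^ 2` in the monomial basis, up to degree `E`. -/
def gram (μ : NodalMeasure) (E : ℕ) : Matrix (Fin (E + 1)) (Fin (E + 1)) ℝ :=
  Matrix.of fun i j ↦ ∑ k, μ.weight k * μ.node k ^ (i + j : ℕ)

theorem integral_sq_eq_gram {P : A[X]} (hP : P.natDegree ≤ E) :
    μ.integral (P ^ 2) = Polynomial.toFn (E + 1) P ⬝ᵥ (μ.gram E).map (algebraMap ℝ A) *ᵥ
      Polynomial.toFn (E + 1) P := by
  have hsum (x : A) : P.eval x = ∑ i : Fin (E + 1), P.coeff i * x ^ (i : ℕ) := by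
    rw [Polynomial.eval_eq_sum_range' (by lia : P.natDegree < E + 1), Finset.sum_range]
  simp only [integral_apply, Polynomial.eval_pow, hsum, dotProduct_mulVec_eq_sum]
  simp only [sq, Finset.sum_mul_sum, Finset.smul_sum]
  rw [Finset.sum_comm]
  refine Finset.sum_congr rfl fun i _ ↦ ?_
  rw [Finset.sum_comm]
  refine Finset.sum_congr rfl fun j _ ↦ ?_
  simp only [gram, Matrix.map_apply, Matrix.of_apply, map_sum, Finset.sum_mul, Finset.mul_sum]
  refine Finset.sum_congr rfl fun k _ ↦ ?_
  simp [Algebra.smul_def, Polynomial.toFn, pow_add]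
  ring

theorem isHermitian_gram (μ : NodalMeasure) (E : ℕ) : (μ.gram E).IsHermitian := by
  ext i j
  simp [gram, add_comm]

theorem posDef_gram (hμ : μ.IsPosDef E) : (μ.gram E).PosDef := by
  refine .of_dotProduct_mulVec_pos (isHermitian_gram μ E) fun v hv ↦ ?_
  have hdeg := Nat.lt_succ_iff.1 (Polynomial.ofFn_natDegree_lt E.succ_pos v)
  have h := hμ _ hdeg fun h0 ↦ hv (Polynomial.injective_ofFn (E + 1) (h0.trans (map_zero _).symm))
  rw [integral_sq_eq_gram hdeg, Polynomial.toFn_comp_ofFn_eq_id] at h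
  simpa using h

theorem exists_isSumSq_smul_integral_sub {ν : NodalMeasure} (hν : ν.IsPosDef E)
    (μ : NodalMeasure) : ∃ C : ℝ, 0 < C ∧ ∀ P : A[X], P.natDegree ≤ E →
      IsSumSq (C • ν.integral (P ^ 2) - μ.integral (P ^ 2)) := by
  obtain ⟨C, hC, hle⟩ := exists_le_smul_of_posDef (posDef_gram hν) (isHermitian_gram μ E)
  refine ⟨C, hC, fun P hP ↦ ?_⟩
  rw [integral_sq_eq_gram hP, integral_sq_eq_gram hP]
  convert isSumSq_dotProduct_mulVec_of_nonneg (sub_nonneg.2 hle) (Polynomial.toFn (E + 1) P)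
  simp only [dotProduct_mulVec_eq_sum, Finset.smul_sum, ← Finset.sum_sub_distrib]
  refine Finset.sum_congr rfl fun i _ ↦ Finset.sum_congr rfl fun j _ ↦ ?_
  rw [Algebra.smul_def]
  simp
  ring

end NodalMeasure
end NodalMeasures

section Segments

open scoped Polynomial
open Polynomial (derivative)

variable {σ A : Type*} [CommRing A] [Algebra ℝ A]

theorem pderiv_comm (i j : σ) (p : MvPolynomial σ ℝ) :
    pderiv i (pderiv j p) = pderiv j (pderiv i p) := by
  classical
  have h : ⁅pderiv (R := ℝ) i, pderiv j⁆ = 0 :=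
    MvPolynomial.derivation_ext fun k ↦ by
      rw [Derivation.commutator_apply]
      simp [pderiv_X, Pi.single_apply, apply_ite]
  have := DFunLike.congr_fun h p
  rwa [Derivation.commutator_apply, Derivation.zero_apply, sub_eq_zero] at this

/-- The Hessian matrix of a polynomial, as a matrix of polynomials. -/
def hessian (p : MvPolynomial σ ℝ) : Matrix σ σ (MvPolynomial σ ℝ) :=
  Matrix.of fun i j ↦ pderiv i (pderiv j p)

theorem isSymm_hessian (p : MvPolynomial σ ℝ) : (hessian p).IsSymm :=
  Matrix.IsSymm.ext fun i j ↦ pderiv_comm j i p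

/-- The restriction of real polynomials to the line `s ↦ u + s w`. -/
def restrictLine (u w : σ → A) : MvPolynomial σ ℝ →ₐ[ℝ] A[X] :=
  aeval fun i ↦ Polynomial.C (u i) + Polynomial.X * Polynomial.C (w i)

theorem eval_restrictLine (u x : σ → A) (p : MvPolynomial σ ℝ) (s : ℝ) :
    (restrictLine u (x - u) p).eval (algebraMap ℝ A s) = aeval (AffineMap.lineMap u x s) p := by
  have h : ((Polynomial.aeval (algebraMap ℝ A s)).restrictScalars ℝ).comp
      (restrictLine u (x - u)) = aeval (AffineMap.lineMap u x s) := by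
    ext i
    simp [restrictLine, AffineMap.lineMap_apply, Algebra.smul_def, add_comm]
  simpa using DFunLike.congr_fun h p

theorem eval_zero_restrictLine (u w : σ → A) (p : MvPolynomial σ ℝ) :
    (restrictLine u w p).eval 0 = aeval u p := by
  simpa using eval_restrictLine u (u + w) p 0

theorem eval_one_restrictLine (u x : σ → A) (p : MvPolynomial σ ℝ) :
    (restrictLine u (x - u) p).eval 1 = aeval x p := by
  simpa using eval_restrictLine u x p 1

/-- A point with coordinates in `A` all of whose real specializations that are compatible with `Q`
lie in `S`. -/
def IsPoint (Q : AddSubmonoid A) (S : Set (σ → ℝ)) (z : σ → A) : Prop :=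
  ∀ χ ∈ positiveCharacters Q, χ ∘ z ∈ S

variable {Q : AddSubmonoid A} {S : Set (σ → ℝ)} {u x z : σ → A}

theorem apply_aeval (χ : A →ₐ[ℝ] ℝ) (z : σ → A) (p : MvPolynomial σ ℝ) :
    χ (aeval z p) = eval (χ ∘ z) p := by
  rw [← AlgHom.comp_apply, comp_aeval, aeval_eq_eval]
  rfl

theorem IsPoint.lineMap (hS : Convex ℝ S) (hu : IsPoint Q S u) (hx : IsPoint Q S x)
    (s : unitInterval) : IsPoint Q S (AffineMap.lineMap u x (s : ℝ)) := by
  intro χ hχ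
  convert hS.lineMap_mem (hu χ hχ) (hx χ hχ) s.2
  ext i
  simp [AffineMap.lineMap_apply]

theorem IsPoint.aeval_mem (hz : IsPoint Q S z) (hQ : IsArchimedeanModule Q)
    {p : MvPolynomial σ ℝ} (hp : ∀ y ∈ S, 0 < eval y p) : aeval z p ∈ Q :=
  hQ.mem_of_forall_character_pos fun χ hχ ↦ apply_aeval χ z p ▸ hp _ (hz χ hχ)

variable [Fintype σ]

theorem mkDerivation_eq_sum (h : σ → MvPolynomial σ ℝ) (p : MvPolynomial σ ℝ) :
    mkDerivation ℝ h p = ∑ i, h i * pderiv i p := by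
  classical
  have happly (q : MvPolynomial σ ℝ) :
      (∑ i, h i • pderiv (R := ℝ) i) q = ∑ i, h i * pderiv i q := by
    simp only [← Derivation.coeFnAddMonoidHom_apply, map_sum, Finset.sum_apply]
    simp
  rw [← happly]
  exact DFunLike.congr_fun (derivation_ext fun k ↦ by simp [happly, pderiv_X, Pi.single_apply]) p

/-- Differentiation of polynomials in the constant direction `v`. -/
def directional (v : σ → ℝ) : Derivation ℝ (MvPolynomial σ ℝ) (MvPolynomial σ ℝ) :=
  mkDerivation ℝ fun i ↦ C (v i)

theorem directional_apply (v : σ → ℝ) (p : MvPolynomial σ ℝ) :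
    directional v p = ∑ i, C (v i) * pderiv i p :=
  mkDerivation_eq_sum _ p

theorem dotProduct_hessian_mulVec (p : MvPolynomial σ ℝ) (z v : σ → ℝ) :
    v ⬝ᵥ (hessian p).map (eval z) *ᵥ v = eval z (directional v (directional v p)) := by
  simp only [dotProduct_mulVec_eq_sum, directional_apply, map_sum, pderiv_mul, pderiv_C]
  refine Finset.sum_congr rfl fun i _ ↦ Finset.sum_congr rfl fun j _ ↦ ?_
  simp only [hessian, map_apply, of_apply, zero_mul, zero_add, map_mul, eval_C, pderiv_comm i j]
  ring

theorem derivative_restrictLine (u w : σ → A) (p : MvPolynomial σ ℝ) :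
    derivative (restrictLine u w p) =
      ∑ i, restrictLine u w (pderiv i p) * Polynomial.C (w i) := by
  classical
  induction p using MvPolynomial.induction_on with
  | C a => simp [restrictLine, IsScalarTower.algebraMap_apply ℝ A A[X]]
  | add p q hp hq => simp [hp, hq, add_mul, Finset.sum_add_distrib]
  | mul_X p i hp =>
    have hX : derivative (restrictLine u w (X i)) = Polynomial.C (w i) := by simp [restrictLine]
    have hsingle : ∑ j, restrictLine u w (p * pderiv j (X i)) * Polynomial.C (w j) =
        restrictLine u w p * Polynomial.C (w i) := by
      rw [Finset.sum_eq_single i] <;> simp +contextual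
    simp only [map_mul, Polynomial.derivative_mul, hp, hX, pderiv_mul, map_add, add_mul,
      Finset.sum_add_distrib, Finset.sum_mul] at hsingle ⊢
    rw [hsingle]
    simp only [mul_right_comm]

theorem neg_derivative_derivative_restrictLine (u w : σ → A) (p : MvPolynomial σ ℝ) :
    -derivative (derivative (restrictLine u w p)) =
      (Polynomial.C ∘ w) ⬝ᵥ (-hessian p).map (restrictLine u w) *ᵥ (Polynomial.C ∘ w) := by
  rw [derivative_restrictLine, dotProduct_mulVec_eq_sum, Finset.sum_comm]
  simp only [map_sum, Polynomial.derivative_mul, derivative_restrictLine, Polynomial.derivative_C,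
    mul_zero, add_zero, Finset.sum_mul, ← Finset.sum_neg_distrib]
  refine Finset.sum_congr rfl fun j _ ↦ Finset.sum_congr rfl fun i _ ↦ ?_
  simp [hessian]
  ring

/-- The polynomial `f` is concave on the segment from `u` to `x`, as certified by the quadratic
module `Q` of the coefficient ring. -/
def ConcaveAlong (Q : AddSubmonoid A) (f : MvPolynomial σ ℝ) (u x : σ → A) : Prop :=
  ∀ s : unitInterval, (x - u) ⬝ᵥ (-hessian f).map (aeval (AffineMap.lineMap u x (s : ℝ))) *ᵥ
    (x - u) ∈ Q

variable {f : MvPolynomial σ ℝ}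

theorem eval_neg_derivative_derivative_restrictLine (u x : σ → A) (f : MvPolynomial σ ℝ) (s : ℝ) :
    (-derivative (derivative (restrictLine u (x - u) f))).eval (algebraMap ℝ A s) =
      (x - u) ⬝ᵥ (-hessian f).map (aeval (AffineMap.lineMap u x s)) *ᵥ (x - u) := by
  simp only [neg_derivative_derivative_restrictLine, dotProduct_mulVec_eq_sum,
    Polynomial.eval_finsetSum]
  refine Finset.sum_congr rfl fun i _ ↦ Finset.sum_congr rfl fun j _ ↦ ?_
  simp [eval_restrictLine]

theorem ConcaveAlong.tangent_mem (hf : ConcaveAlong Q f u x) (hQ : IsQuadraticModule Q) :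
    ∑ i, aeval u (pderiv i f) * (x i - u i) + aeval u f - aeval x f ∈ Q := by
  obtain ⟨μ, hμ⟩ := NodalMeasure.exists_isQuadrature (restrictLine u (x - u) f).natDegree
  have htaylor := hμ.integral_taylor le_rfl
  have hslope : (derivative (restrictLine u (x - u) f)).eval 0 =
      ∑ i, aeval u (pderiv i f) * (x i - u i) := by
    simp [derivative_restrictLine, Polynomial.eval_finsetSum, eval_zero_restrictLine]
  rw [hslope, eval_zero_restrictLine, eval_one_restrictLine] at htaylor
  rw [← htaylor]
  refine NodalMeasure.integral_mem hQ fun s ↦ ?_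
  rw [Polynomial.eval_mul, eval_neg_derivative_derivative_restrictLine]
  have : (1 - Polynomial.X : A[X]).eval (algebraMap ℝ A s) = algebraMap ℝ A (1 - s) := by simp
  rw [this, ← Algebra.smul_def]
  exact hQ.smul_mem (unitInterval.one_minus_nonneg s) (hf s)

theorem ConcaveAlong.chord_mem (hf : ConcaveAlong Q f u x) (hQ : IsQuadraticModule Q)
    (hu : aeval u f ∈ Q) (hx : aeval x f ∈ Q) (t : unitInterval) :
    aeval (AffineMap.lineMap u x (t : ℝ)) f ∈ Q := by
  obtain ⟨μ, hμ⟩ := NodalMeasure.exists_isQuadrature (restrictLine u (x - u) f).natDegree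
  have ht := unitInterval.one_minus_nonneg t
  rw [← eval_restrictLine, hμ.eval_eq_chord le_rfl, eval_zero_restrictLine, eval_one_restrictLine]
  refine Q.add_mem (Q.add_mem (hQ.smul_mem ht hu) (hQ.smul_mem t.2.1 hx))
    (hQ.smul_mem (mul_nonneg t.2.1 ht) (NodalMeasure.integral_mem hQ fun s ↦ ?_))
  rw [eval_neg_derivative_derivative_restrictLine]
  exact hf s

theorem IsPoint.dotProduct_mulVec_mem (hz : IsPoint Q S z) (hQ : IsArchimedeanModule Q)
    {H : Matrix σ σ (MvPolynomial σ ℝ)} (hH : H.IsSymm) {δ : ℝ} (hδ : 0 < δ)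
    (hpos : ∀ y ∈ S, ∀ v, δ * v ⬝ᵥ v ≤ v ⬝ᵥ H.map (eval y) *ᵥ v) (w : σ → A) :
    w ⬝ᵥ H.map (aeval z) *ᵥ w ∈ Q := by
  classical
  refine hQ.dotProduct_mulVec_mem (hH.map _) hδ (fun χ hχ v ↦ ?_) w
  have : (H.map (aeval z)).map χ = H.map (eval (χ ∘ z)) := by
    ext i j
    exact apply_aeval χ z _
  rw [this]
  exact hpos _ (hz χ hχ) v

end Segments

section Compactness

open Filter Topology

theorem eventually_forall_inv_lt_add_mul {X : Type*} [TopologicalSpace X] {K : Set X}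
    (hK : IsCompact K) {f p : X → ℝ} (hf : ContinuousOn f K) (hp : ContinuousOn p K)
    (hp0 : ∀ z ∈ K, 0 ≤ p z) (hpos : ∀ z ∈ K, p z = 0 → 0 < f z) :
    ∀ᶠ κ : ℝ in atTop, ∀ z ∈ K, κ⁻¹ < f z + κ * p z := by
  suffices ∀ᶠ κ : ℝ in atTop, ∀ z ∈ K, z ∈ K → κ⁻¹ < f z + κ * p z by
    filter_upwards [this] with κ hκ z hz using hκ z hz hz
  refine hK.induction_on (p := fun s ↦ ∀ᶠ κ : ℝ in atTop, ∀ z ∈ s, z ∈ K → κ⁻¹ < f z + κ * p z)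
    (by simp) (fun s t hst ht ↦ ht.mono fun κ hκ z hz ↦ hκ z (hst hz))
    (fun s t hs ht ↦ ?_) fun x hx ↦ ?_
  · filter_upwards [hs, ht] with κ hκs hκt z hz
    exact hz.elim (hκs z) (hκt z)
  · rcases (hp0 x hx).eq_or_lt with hzero | hppos
    · have hfx := hpos x hx hzero.symm
      refine ⟨{z | f x / 2 < f z}, (hf x hx).eventually_const_lt (half_lt_self hfx), ?_⟩
      filter_upwards [eventually_gt_atTop 0, tendsto_inv_atTop_zero.eventually_lt_const
        (half_pos hfx)] with κ hκ hinv z hz hzK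
      exact (hinv.trans hz).trans_le (le_add_of_nonneg_right (mul_nonneg hκ.le (hp0 z hzK)))
    · refine ⟨{z | f x - 1 < f z} ∩ {z | p x / 2 < p z},
        inter_mem ((hf x hx).eventually_const_lt (sub_one_lt _))
          ((hp x hx).eventually_const_lt (half_lt_self hppos)), ?_⟩
      filter_upwards [eventually_ge_atTop 1, (tendsto_id.atTop_mul_const
        (half_pos hppos)).eventually_ge_atTop (2 - f x)] with κ hκ hlarge z hz _
      have h1 : κ⁻¹ ≤ 1 := inv_le_one_of_one_le₀ hκ
      have h2 : κ * (p x / 2) ≤ κ * p z := by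
        gcongr
        exact hz.2.le
      have h3 : f x - 1 < f z := hz.1
      have h4 : 2 - f x ≤ κ * (p x / 2) := hlarge
      linarith

theorem exists_pos_forall_lt {X : Type*} [TopologicalSpace X] {K : Set X} (hK : IsCompact K)
    {f : X → ℝ} (hf : ContinuousOn f K) (hpos : ∀ z ∈ K, 0 < f z) :
    ∃ δ > 0, ∀ z ∈ K, δ < f z := by
  obtain ⟨κ, hκ, hκ0⟩ := ((eventually_forall_inv_lt_add_mul hK hf continuousOn_const
    (fun _ _ ↦ le_rfl) fun z hz _ ↦ hpos z hz).and (eventually_gt_atTop 0)).exists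
  exact ⟨κ⁻¹, inv_pos.2 hκ0, by simpa using hκ⟩

variable {σ : Type*} [Fintype σ]

theorem isCompact_dotProduct_self_eq_one : IsCompact {v : σ → ℝ | v ⬝ᵥ v = 1} := by
  refine isCompact_Icc.of_isClosed_subset (s := Set.Icc (-1) 1)
    (isClosed_eq (by fun_prop) continuous_const) fun v (hv : v ⬝ᵥ v = 1) ↦ ?_
  have hle (i : σ) : v i ^ 2 ≤ 1 := by
    rw [← hv, sq]
    exact Finset.single_le_sum (f := fun i ↦ v i * v i) (fun j _ ↦ mul_self_nonneg _)
      (Finset.mem_univ i)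
  exact ⟨fun i ↦ (abs_le.1 (sq_le_one_iff_abs_le_one _ |>.1 (hle i))).1,
    fun i ↦ (abs_le.1 (sq_le_one_iff_abs_le_one _ |>.1 (hle i))).2⟩

theorem exists_pos_forall_mul_dotProduct_le {X : Type*} [TopologicalSpace X] {K : Set X}
    (hK : IsCompact K) {H : X → Matrix σ σ ℝ} (hH : Continuous H)
    (hpos : ∀ z ∈ K, ∀ v, v ⬝ᵥ v = 1 → 0 < v ⬝ᵥ H z *ᵥ v) :
    ∃ δ > 0, ∀ z ∈ K, ∀ v, δ * v ⬝ᵥ v ≤ v ⬝ᵥ H z *ᵥ v := by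
  obtain ⟨δ, hδ, hlt⟩ := exists_pos_forall_lt (hK.prod isCompact_dotProduct_self_eq_one)
    (f := fun q : X × (σ → ℝ) ↦ q.2 ⬝ᵥ H q.1 *ᵥ q.2) (by fun_prop)
    fun q hq ↦ hpos q.1 hq.1 q.2 hq.2
  refine ⟨δ, hδ, fun z hz v ↦ ?_⟩
  rcases eq_or_ne v 0 with rfl | hv
  · simp
  have hvv : 0 < v ⬝ᵥ v := by simpa using dotProduct_self_star_pos_iff.2 hv
  set r := √(v ⬝ᵥ v)
  have hr0 : 0 < r := Real.sqrt_pos.2 hvv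
  have hrr : r * r = v ⬝ᵥ v := Real.mul_self_sqrt hvv.le
  have hunit : (r⁻¹ • v) ⬝ᵥ (r⁻¹ • v) = 1 := by
    simp only [smul_dotProduct, dotProduct_smul, ← hrr, smul_eq_mul]
    field_simp
  have := (hlt (z, r⁻¹ • v) ⟨hz, hunit⟩).le
  simp only [smul_dotProduct, dotProduct_smul, mulVec_smul, smul_eq_mul] at this
  rw [← hrr]
  field_simp at this
  linarith

end Compactness

section StrictSurrogates

open Filter Topology

theorem geom_sum_sq_le {y : ℝ} (h0 : 0 ≤ y) (h1 : y ≤ 1) {M : ℕ} (hM : 2 ≤ M) :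
    (∑ j ∈ Finset.range M, y ^ j) ^ 2 ≤
      4 * ∑ j ∈ Finset.range M, ∑ i ∈ Finset.range j, y ^ i := by
  induction M, hM using Nat.le_induction with
  | base =>
    simp only [Finset.sum_range_succ, Finset.sum_range_zero]
    nlinarith
  | succ M hM ih =>
    rw [Finset.sum_range_succ, Finset.sum_range_succ _ M]
    have hone : 1 ≤ ∑ j ∈ Finset.range M, y ^ j :=
      Finset.single_le_sum (f := fun j ↦ y ^ j) (fun j _ ↦ pow_nonneg h0 j)
        (Finset.mem_range.2 (two_pos.trans_le hM))
    have hyM0 : 0 ≤ y ^ M := pow_nonneg h0 M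
    have hyM : y ^ M ≤ 1 := pow_le_one₀ h0 h1
    nlinarith

theorem mul_geom_sum_sq_lt {y t : ℝ} (h0 : 0 ≤ y) (h1 : y ≤ 1) (ht : t < 1 / 4) {M : ℕ}
    (hM : 2 ≤ M) :
    t * (∑ j ∈ Finset.range M, y ^ j) ^ 2 < ∑ j ∈ Finset.range M, ∑ i ∈ Finset.range j, y ^ i := by
  have hone : 1 ≤ ∑ j ∈ Finset.range M, y ^ j :=
    Finset.single_le_sum (f := fun j ↦ y ^ j) (fun j _ ↦ pow_nonneg h0 j)
      (Finset.mem_range.2 (two_pos.trans_le hM))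
  calc t * (∑ j ∈ Finset.range M, y ^ j) ^ 2 < 1 / 4 * (∑ j ∈ Finset.range M, y ^ j) ^ 2 := by
        gcongr
    _ ≤ _ := by linarith [geom_sum_sq_le h0 h1 hM]

theorem isSumSq_geom_sum {A : Type*} [CommRing A] [Algebra ℝ A] (y : A) {M : ℕ} (hM : Odd M) :
    IsSumSq (∑ j ∈ Finset.range M, y ^ j) := by
  have hhalf {s : A} (hs : IsSumSq s) : IsSumSq ((1 / 2 : ℝ) • s) :=
    (isQuadraticModule_sumSq A).smul_mem one_half_pos.le hs
  obtain ⟨r, rfl⟩ := hM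
  suffices IsSumSq (∑ j ∈ Finset.range (2 * r + 1), y ^ j - (1 / 2 : ℝ) • (y ^ r) ^ 2) by
    simpa using this.add (hhalf (IsSquare.sq (y ^ r)).isSumSq)
  induction r with
  | zero =>
    convert hhalf (IsSumSq.one (R := A)) using 1
    simp only [Nat.mul_zero, zero_add, Finset.sum_range_one, pow_zero]
    algebra
  | succ r ih =>
    have hstep : ∑ j ∈ Finset.range (2 * (r + 1) + 1), y ^ j - (1 / 2 : ℝ) • (y ^ (r + 1)) ^ 2 =
        ∑ j ∈ Finset.range (2 * r + 1), y ^ j - (1 / 2 : ℝ) • (y ^ r) ^ 2 +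
          (1 / 2 : ℝ) • (y ^ r * (1 + y)) ^ 2 := by
      rw [show 2 * (r + 1) + 1 = 2 * r + 1 + 1 + 1 by ring, Finset.sum_range_succ,
        Finset.sum_range_succ]
      algebra
    rw [hstep]
    exact ih.add (hhalf (IsSquare.sq (y ^ r * (1 + y))).isSumSq)

/-- The strictly concave reparametrization `φ + ε φ ^ 2 p`, with `φ = 1 - (1 - γ) ^ M`, of a
function `γ` with values in `[0, 1/2]`. -/
def cap {A : Type*} [CommRing A] [Algebra ℝ A] (M : ℕ) (ε : ℝ) (γ p : A) : A :=
  1 - (1 - γ) ^ M + ε • ((1 - (1 - γ) ^ M) ^ 2 * p)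

theorem cap_eq_sub {A : Type*} [CommRing A] [Algebra ℝ A] (M : ℕ) (ε : ℝ) (γ p : A) :
    cap M ε γ p = M * γ - γ ^ 2 *
      (∑ j ∈ Finset.range M, ∑ i ∈ Finset.range j, (1 - γ) ^ i -
        ε • ((∑ j ∈ Finset.range M, (1 - γ) ^ j) ^ 2 * p)) := by
  have hφ (M : ℕ) : 1 - (1 - γ) ^ M = γ * ∑ j ∈ Finset.range M, (1 - γ) ^ j := by
    simpa using (mul_neg_geom_sum (1 - γ) M).symm
  have hψ : ∑ j ∈ Finset.range M, (1 - γ) ^ j =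
      M - γ * ∑ j ∈ Finset.range M, ∑ i ∈ Finset.range j, (1 - γ) ^ i := by
    simp only [Finset.mul_sum, ← hφ]
    simp
  rw [cap, hφ]
  nth_rw 1 [hψ]
  algebra

section Derivation

variable {A : Type*} [CommRing A] [Algebra ℝ A] (D : Derivation ℝ A A)

theorem derivation_one_sub_one_sub_pow (k : ℕ) (γ : A) :
    D (1 - (1 - γ) ^ (k + 1)) = (k + 1) * (1 - γ) ^ k * D γ := by
  simp [Derivation.leibniz_pow]
  ring

theorem derivation_derivation_one_sub_one_sub_pow (k : ℕ) (γ : A) :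
    D (D (1 - (1 - γ) ^ (k + 2))) =
      (k + 2) * ((1 - γ) ^ (k + 1) * D (D γ) - (k + 1) * (1 - γ) ^ k * D γ ^ 2) := by
  rw [derivation_one_sub_one_sub_pow]
  simp [Derivation.leibniz_pow]
  ring

theorem derivation_derivation_add_smul_sq_mul (ε : ℝ) (φ p : A) :
    D (D (φ + ε • (φ ^ 2 * p))) = D (D φ) + ε • (2 * φ * D (D φ) * p + 2 * D φ ^ 2 * p +
      4 * φ * D φ * D p + φ ^ 2 * D (D p)) := by
  simp only [pow_two, map_add, Derivation.map_smul, Derivation.leibniz, smul_eq_mul]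
  algebra

end Derivation

theorem cap_second_derivative_le {B ε y a h p p₁ : ℝ} {k : ℕ} (hε : 0 ≤ ε)
    (hεB : ε * B ≤ 1 / 72) (hy0 : 0 ≤ y) (hy1 : y ≤ 1) (hp0 : 0 ≤ p) (hpB : p ≤ B)
    (hp₁ : p₁ ^ 2 ≤ 4 * B) :
    let φ := 1 - y ^ (k + 2)
    let φ₁ := (k + 2) * y ^ (k + 1) * a
    let φ₂ := (k + 2) * (y ^ (k + 1) * h - (k + 1) * y ^ k * a ^ 2)
    φ₂ + ε * (2 * φ * φ₂ * p + 2 * φ₁ ^ 2 * p + 4 * φ * φ₁ * p₁ - 2 * φ ^ 2) ≤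
      (k + 2) * y ^ k * ((1 + 2 * ε * φ * p) * (y * h) - (k + 1) / 2 * a ^ 2) - ε * φ ^ 2 := by
  intro φ φ₁ φ₂
  have hφ0 : 0 ≤ φ := sub_nonneg.2 (pow_le_one₀ hy0 hy1)
  have hcross : 2 * φ₁ ^ 2 * p + 4 * φ * φ₁ * p₁ - 2 * φ ^ 2 ≤ 18 * B * φ₁ ^ 2 - φ ^ 2 := by
    nlinarith [sq_nonneg (φ - 2 * φ₁ * p₁), mul_le_mul_of_nonneg_left hpB (sq_nonneg φ₁),
      mul_le_mul_of_nonneg_left hp₁ (sq_nonneg φ₁)]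
  have hφ₁ : φ₁ ^ 2 ≤ (k + 2) * ((k + 2) * y ^ k * a ^ 2) := by
    have : φ₁ ^ 2 = (k + 2) * ((k + 2) * y ^ k * a ^ 2) * y ^ (k + 2) := by ring
    rw [this]
    exact mul_le_of_le_one_right (by positivity) (pow_le_one₀ hy0 hy1)
  have habsorb : ε * (18 * B * φ₁ ^ 2) ≤ (k + 1) / 2 * ((k + 2) * y ^ k * a ^ 2) := by
    calc ε * (18 * B * φ₁ ^ 2) = 18 * (ε * B) * φ₁ ^ 2 := by ring
      _ ≤ 18 * (1 / 72) * ((k + 2) * ((k + 2) * y ^ k * a ^ 2)) := by gcongr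
      _ = (k + 2) / 4 * ((k + 2) * y ^ k * a ^ 2) := by ring
      _ ≤ (k + 1) / 2 * ((k + 2) * y ^ k * a ^ 2) := by
        gcongr ?_ * _
        have : (0 : ℝ) ≤ k := k.cast_nonneg
        linarith
  have hcurv : 0 ≤ 2 * ε * φ * p * ((k + 1) * ((k + 2) * y ^ k * a ^ 2)) := by positivity
  have hφ₂ : (1 + 2 * ε * φ * p) * φ₂ = (1 + 2 * ε * φ * p) * ((k + 2) * y ^ k * (y * h)) -
      (1 + 2 * ε * φ * p) * ((k + 1) * ((k + 2) * y ^ k * a ^ 2)) := by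
    simp only [φ₂]
    ring
  linarith [mul_le_mul_of_nonneg_left hcross hε]

theorem cap_second_derivative_bound_neg {κ ε F γ a h : ℝ} {k : ℕ} (hκ : 0 < κ) (hε : 0 < ε)
    (hF1 : 1 ≤ F) (hF2 : F ≤ 2) (hγ0 : 0 ≤ γ) (hγ : γ ≤ 1 / 2)
    (hh : h ≤ κ * (a ^ 2 + γ) - κ⁻¹) (hk : 4 * κ ≤ k + 1)
    (hsmall : (k + 2) * (1 - κ⁻¹ ^ 2 / 4) ^ k * κ < ε / 4)
    (hpow : (1 - κ⁻¹ ^ 2 / 4) ^ (k + 2) ≤ 1 / 2) :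
    (k + 2) * (1 - γ) ^ k * (F * ((1 - γ) * h) - (k + 1) / 2 * a ^ 2) -
      ε * (1 - (1 - γ) ^ (k + 2)) ^ 2 < 0 := by
  have hy : 1 / 2 ≤ 1 - γ := by linarith
  have hbound : F * ((1 - γ) * h) - (k + 1) / 2 * a ^ 2 ≤ 2 * κ * γ - κ⁻¹ / 2 := by
    have hFy1 : 1 / 2 ≤ F * (1 - γ) := by nlinarith
    have hFy2 : F * (1 - γ) ≤ 2 := by nlinarith
    have hgain : F * (1 - γ) * (κ * (a ^ 2 + γ)) ≤ 2 * (κ * (a ^ 2 + γ)) := by gcongr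
    have hloss : 1 / 2 * κ⁻¹ ≤ F * (1 - γ) * κ⁻¹ := by gcongr
    have hh' := mul_le_mul_of_nonneg_left hh (one_half_pos.le.trans hFy1)
    nlinarith [mul_le_mul_of_nonneg_right hk (sq_nonneg a)]
  have hyk : 0 < (k + 2) * (1 - γ) ^ k := by positivity
  rcases lt_or_ge γ (κ⁻¹ ^ 2 / 4) with hnear | hfar
  · have : 2 * κ * γ < κ⁻¹ / 2 := by
      calc 2 * κ * γ < 2 * κ * (κ⁻¹ ^ 2 / 4) := by gcongr
        _ = κ⁻¹ / 2 := by field_simp; norm_num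
    have hsq := mul_nonneg hε.le (sq_nonneg (1 - (1 - γ) ^ (k + 2)))
    linarith [mul_neg_of_pos_of_neg hyk (hbound.trans_lt (sub_neg.2 this))]
  · have hyle : 1 - γ ≤ 1 - κ⁻¹ ^ 2 / 4 := by linarith
    have hfirst : (k + 2) * (1 - γ) ^ k * (F * ((1 - γ) * h) - (k + 1) / 2 * a ^ 2) < ε / 4 := by
      calc _ ≤ (k + 2) * (1 - γ) ^ k * κ := by
            gcongr
            nlinarith [inv_pos.2 hκ]
        _ ≤ (k + 2) * (1 - κ⁻¹ ^ 2 / 4) ^ k * κ := by gcongr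
        _ < ε / 4 := hsmall
    have hφ : 1 / 2 ≤ 1 - (1 - γ) ^ (k + 2) := by
      linarith [pow_le_pow_left₀ (by linarith) hyle (k + 2)]
    nlinarith [mul_le_mul_of_nonneg_left (pow_le_pow_left₀ one_half_pos.le hφ 2) hε.le]

theorem exists_odd_pow_small {r : ℝ} (hr0 : 0 ≤ r) (hr1 : r < 1) (κ : ℝ) {η : ℝ} (hη : 0 < η) :
    ∃ k : ℕ, Odd k ∧ κ ≤ k + 1 ∧ (k + 2) * r ^ k * κ < η ∧ r ^ (k + 2) ≤ 1 / 2 := by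
  have hpow := tendsto_pow_atTop_nhds_zero_of_lt_one hr0 hr1
  have hlin : Tendsto (fun k : ℕ ↦ (k + 2) * r ^ k * κ) atTop (𝓝 0) := by
    simpa [add_mul] using ((tendsto_self_mul_const_pow_of_lt_one hr0 hr1).add
      (hpow.const_mul 2)).mul_const κ
  have hlarge : ∀ᶠ k : ℕ in atTop, κ ≤ k + 1 :=
    (tendsto_natCast_atTop_atTop.eventually_ge_atTop κ).mono fun k hk ↦ hk.trans (by simp)
  obtain ⟨k, hodd, hk, hsmall, hhalf⟩ := (Nat.frequently_odd.and_eventually (hlarge.and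
    ((hlin.eventually_lt_const hη).and
      (((tendsto_add_atTop_iff_nat 2).2 hpow).eventually_le_const one_half_pos)))).exists
  exact ⟨k, hodd, hk, hsmall, hhalf⟩

/-- `f` is a strictly concave replacement on `S` for the polynomial `G`: near the zero set of `G`
it is a positive multiple of `G` up to second order, and it is nonnegative where `G` is, both
properties holding with certificates. -/
structure IsStrictSurrogate {σ : Type*} [Fintype σ] (S : Set (σ → ℝ))
    (G f : MvPolynomial σ ℝ) : Prop where
  exists_eq_sub : ∃ κ > 0, ∃ χ, f = C κ * G - G ^ 2 * χ ∧ ∀ z ∈ S, 0 < eval z χ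
  exists_eq_add : ∃ s q p, IsSumSq s ∧ f = s * G + q ^ 2 * p ∧ ∀ z ∈ S, 0 < eval z p
  pos_of_pos : ∀ z ∈ S, 0 < eval z G → 0 < eval z f
  exists_concave : ∃ δ > 0, ∀ z ∈ S, ∀ v, δ * v ⬝ᵥ v ≤ v ⬝ᵥ (-hessian f).map (eval z) *ᵥ v

/-- The polynomial `B - ∑ X i ^ 2`. -/
def ballPolynomial {σ : Type*} [Fintype σ] (B : ℝ) : MvPolynomial σ ℝ :=
  C B - ∑ i, X i ^ 2

theorem eval_ballPolynomial {σ : Type*} [Fintype σ] (B : ℝ) (z : σ → ℝ) :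
    eval z (ballPolynomial B) = B - z ⬝ᵥ z := by
  simp [ballPolynomial, dotProduct, sq]

theorem directional_ballPolynomial {σ : Type*} [Fintype σ] (B : ℝ) (v : σ → ℝ) :
    directional v (ballPolynomial B) = ∑ i, C (-2 * v i) * X i := by
  classical
  rw [directional_apply]
  refine Finset.sum_congr rfl fun i _ ↦ ?_
  have : (C 2 : MvPolynomial σ ℝ) = 2 := map_ofNat C 2
  simp [ballPolynomial, pderiv_X, Pi.single_apply, this]
  ring

theorem eval_directional_ballPolynomial {σ : Type*} [Fintype σ] (B : ℝ) (v z : σ → ℝ) :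
    eval z (directional v (ballPolynomial B)) = -2 * z ⬝ᵥ v := by
  simp only [directional_ballPolynomial, dotProduct, Finset.mul_sum, map_sum, map_mul, eval_C,
    eval_X]
  exact Finset.sum_congr rfl fun i _ ↦ by ring

theorem eval_directional_directional_ballPolynomial {σ : Type*} [Fintype σ] (B : ℝ)
    (v z : σ → ℝ) :
    eval z (directional v (directional v (ballPolynomial B))) = -2 * v ⬝ᵥ v := by
  classical
  rw [directional_ballPolynomial, directional_apply]
  simp [pderiv_X, Pi.single_apply, dotProduct, Finset.mul_sum, mul_left_comm]

theorem gradEval_dotProduct {n : ℕ} (p : MvPolynomial (Fin n) ℝ) (z v : Fin n → ℝ) :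
    gradEval p z ⬝ᵥ v = eval z (directional v p) := by
  simp [directional_apply, gradEval, dotProduct, mul_comm]

variable {n : ℕ} {S : Set (Fin n → ℝ)} {G : MvPolynomial (Fin n) ℝ}

theorem StrictlyQuasiconcaveAt.C_mul {z : Fin n → ℝ} (hG : StrictlyQuasiconcaveAt G z) {c : ℝ}
    (hc : 0 < c) : StrictlyQuasiconcaveAt (C c * G) z := by
  have hgrad : gradEval (C c * G) z = c • gradEval G z := by
    ext i
    simp [gradEval]
  have hhess : hessEval (C c * G) z = c • hessEval G z := by
    ext i j
    simp [hessEval]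
  intro v hv h
  rw [hgrad, smul_dotProduct, smul_eq_zero_iff_right hc.ne'] at h
  rw [hhess, smul_mulVec, dotProduct_smul]
  exact smul_neg_of_pos_of_neg hc (hG v hv h)

theorem exists_forall_hessEval_lt (hS : IsCompact S) (hG : ∀ z ∈ S, 0 ≤ eval z G)
    (hqc : ∀ z ∈ S ∩ ZSet G, StrictlyQuasiconcaveAt G z) :
    ∃ κ ≥ 1, ∀ z ∈ S, ∀ v, v ⬝ᵥ v = 1 →
      v ⬝ᵥ hessEval G z *ᵥ v < κ * ((gradEval G z ⬝ᵥ v) ^ 2 + eval z G) - κ⁻¹ := by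
  have heval (p : MvPolynomial (Fin n) ℝ) : Continuous fun z ↦ eval z p := continuous_eval p
  have hgrad : Continuous (gradEval G) := continuous_pi fun i ↦ heval _
  have hhess : Continuous (hessEval G) := continuous_matrix fun i j ↦ heval _
  have hpos : ∀ q ∈ S ×ˢ {v | v ⬝ᵥ v = 1},
      (gradEval G q.1 ⬝ᵥ q.2) ^ 2 + eval q.1 G = 0 → 0 < -(q.2 ⬝ᵥ hessEval G q.1 *ᵥ q.2) := by
    rintro ⟨z, v⟩ ⟨hz, hv⟩ hzero
    obtain ⟨hgrad0, heval0⟩ := (add_eq_zero_iff_of_nonneg (sq_nonneg _) (hG z hz)).1 hzero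
    have hv0 : v ≠ 0 := by
      rintro rfl
      simp at hv
    exact neg_pos.2 (hqc z ⟨hz, heval0⟩ v hv0 (pow_eq_zero_iff two_ne_zero |>.1 hgrad0))
  obtain ⟨κ, hκ, hκ1⟩ := ((eventually_forall_inv_lt_add_mul
    (hS.prod isCompact_dotProduct_self_eq_one) (by fun_prop) (by fun_prop)
    (fun q hq ↦ add_nonneg (sq_nonneg _) (hG q.1 hq.1)) hpos).and (eventually_ge_atTop 1)).exists
  refine ⟨κ, hκ1, fun z hz v hv ↦ ?_⟩
  linarith [hκ (z, v) ⟨hz, hv⟩]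

theorem dotProduct_hessian_cap_mulVec (G : MvPolynomial (Fin n) ℝ) (k : ℕ) (ε B : ℝ)
    (z : Fin n → ℝ) {v : Fin n → ℝ} (hv : v ⬝ᵥ v = 1) :
    let y := 1 - eval z G
    let a := gradEval G z ⬝ᵥ v
    let φ := 1 - y ^ (k + 2)
    let φ₁ := (k + 2) * y ^ (k + 1) * a
    let φ₂ := (k + 2) * (y ^ (k + 1) * v ⬝ᵥ hessEval G z *ᵥ v - (k + 1) * y ^ k * a ^ 2)
    v ⬝ᵥ (hessian (cap (k + 2) ε G (ballPolynomial B))).map (eval z) *ᵥ v =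
      φ₂ + ε * (2 * φ * φ₂ * (B - z ⬝ᵥ z) + 2 * φ₁ ^ 2 * (B - z ⬝ᵥ z) +
        4 * φ * φ₁ * (-2 * z ⬝ᵥ v) - 2 * φ ^ 2) := by
  have hDD : eval z (directional v (directional v G)) = v ⬝ᵥ hessEval G z *ᵥ v :=
    (dotProduct_hessian_mulVec G z v).symm
  rw [dotProduct_hessian_mulVec, cap, derivation_derivation_add_smul_sq_mul,
    derivation_derivation_one_sub_one_sub_pow, derivation_one_sub_one_sub_pow]
  simp [eval_ballPolynomial, hDD, eval_directional_ballPolynomial, gradEval_dotProduct,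
    eval_directional_directional_ballPolynomial, hv]
  ring

theorem exists_cap_hessian_neg (hS : IsCompact S) (hG0 : ∀ z ∈ S, 0 ≤ eval z G)
    (hG1 : ∀ z ∈ S, eval z G ≤ 1 / 2) (hqc : ∀ z ∈ S ∩ ZSet G, StrictlyQuasiconcaveAt G z)
    {B ε : ℝ} (hB : ∀ z ∈ S, z ⬝ᵥ z ≤ B) (hε : 0 < ε) (hεB : ε * B ≤ 1 / 72) :
    ∃ k : ℕ, Odd k ∧ ∀ z ∈ S, ∀ v, v ⬝ᵥ v = 1 →
      0 < v ⬝ᵥ (-hessian (cap (k + 2) ε G (ballPolynomial B))).map (eval z) *ᵥ v := by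
  obtain ⟨κ, hκ1, hhess⟩ := exists_forall_hessEval_lt hS hG0 hqc
  have hκ : 0 < κ := one_pos.trans_le hκ1
  have hκinv : κ⁻¹ ^ 2 ≤ 1 := pow_le_one₀ (inv_nonneg.2 hκ.le) (inv_le_one_of_one_le₀ hκ1)
  obtain ⟨k, hodd, hk, hsmall, hpow⟩ := exists_odd_pow_small (r := 1 - κ⁻¹ ^ 2 / 4) (by linarith)
    (by linarith [pow_pos (inv_pos.2 hκ) 2]) (4 * κ) hε
  refine ⟨k, hodd, fun z hz v hv ↦ ?_⟩
  have hγ0 := hG0 z hz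
  have hγ1 := hG1 z hz
  have hBz := hB z hz
  have hρ : 0 ≤ z ⬝ᵥ z := by simpa using dotProduct_self_star_nonneg z
  have hcauchy : (-2 * z ⬝ᵥ v) ^ 2 ≤ 4 * B := by
    have : (z ⬝ᵥ v) ^ 2 ≤ (z ⬝ᵥ z) * (v ⬝ᵥ v) := by
      simpa only [dotProduct, sq] using Finset.sum_mul_sq_le_sq_mul_sq Finset.univ z v
    rw [hv] at this
    linarith
  set γ := eval z G
  set φ := 1 - (1 - γ) ^ (k + 2)
  have hφ0 : 0 ≤ φ := sub_nonneg.2 (pow_le_one₀ (by linarith) (by linarith))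
  have hφ1 : φ ≤ 1 := sub_le_self 1 (pow_nonneg (by linarith) _)
  have hF0 : 0 ≤ ε * φ * (B - z ⬝ᵥ z) := mul_nonneg (by positivity) (sub_nonneg.2 hBz)
  have hF1 : ε * φ * (B - z ⬝ᵥ z) ≤ ε * 1 * B := by
    gcongr
    linarith
  have hle := cap_second_derivative_le (k := k) (a := gradEval G z ⬝ᵥ v)
    (h := v ⬝ᵥ hessEval G z *ᵥ v) hε.le hεB (y := 1 - γ) (by linarith) (by linarith)
    (sub_nonneg.2 hBz) (sub_le_self B hρ) hcauchy
  have hlt := cap_second_derivative_bound_neg (k := k) (F := 1 + 2 * ε * φ * (B - z ⬝ᵥ z))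
    hκ hε (by linarith) (by linarith) hγ0 hγ1 (hhess z hz v hv).le hk (by linarith) hpow
  have hneg : (-hessian (cap (k + 2) ε G (ballPolynomial B))).map (eval z) =
      -(hessian (cap (k + 2) ε G (ballPolynomial B))).map (eval z) := by
    ext i j
    simp
  rw [hneg, neg_mulVec, dotProduct_neg, neg_pos, dotProduct_hessian_cap_mulVec G k ε B z hv]
  exact hle.trans_lt hlt

theorem isStrictSurrogate_cap (hS : IsCompact S) (hG : ∀ z ∈ S, 0 ≤ eval z G) {c : ℝ} (hc : 0 < c)
    (hG1 : ∀ z ∈ S, c * eval z G ≤ 1 / 2) {B ε : ℝ} (hB : ∀ z ∈ S, z ⬝ᵥ z < B) (hε : 0 < ε)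
    (hεB : ε * B ≤ 1 / 72) {k : ℕ} (hk : Odd k)
    (hcap : ∀ z ∈ S, ∀ v, v ⬝ᵥ v = 1 →
      0 < v ⬝ᵥ (-hessian (cap (k + 2) ε (C c * G) (ballPolynomial B))).map (eval z) *ᵥ v) :
    IsStrictSurrogate S G (cap (k + 2) ε (C c * G) (ballPolynomial B)) where
  exists_eq_sub := by
    refine ⟨((k + 2 : ℕ) : ℝ) * c, by positivity,
      C (c ^ 2) * (∑ j ∈ Finset.range (k + 2), ∑ i ∈ Finset.range j, (1 - C c * G) ^ i -
        ε • ((∑ j ∈ Finset.range (k + 2), (1 - C c * G) ^ j) ^ 2 * ballPolynomial B)), ?_,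
      fun z hz ↦ ?_⟩
    · rw [cap_eq_sub, C_mul, C_pow, map_natCast]
      ring
    · have hball : ε * (B - z ⬝ᵥ z) < 1 / 4 := by
        have : 0 ≤ ε * z ⬝ᵥ z := mul_nonneg hε.le (by simpa using dotProduct_self_star_nonneg z)
        linarith
      have hlt := mul_geom_sum_sq_lt (y := 1 - c * eval z G) (by linarith [hG1 z hz])
        (by linarith [mul_nonneg hc.le (hG z hz)]) hball (Nat.le_add_left 2 k)
      simp only [map_mul, map_sub, map_sum, map_pow, map_one, smul_eval, eval_C,
        eval_ballPolynomial]
      exact mul_pos (pow_pos hc 2) (sub_pos.2 (by linarith))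
  exists_eq_add := by
    refine ⟨c • ∑ j ∈ Finset.range (k + 2), (1 - C c * G) ^ j, 1 - (1 - C c * G) ^ (k + 2),
      ε • ballPolynomial B, (isQuadraticModule_sumSq _).smul_mem hc.le
        (isSumSq_geom_sum _ (hk.add_even even_two)), ?_, fun z hz ↦ ?_⟩
    · have hgeom := mul_neg_geom_sum (1 - C c * G) (k + 2)
      rw [sub_sub_cancel] at hgeom
      rw [cap, ← hgeom, mul_smul_comm, MvPolynomial.smul_eq_C_mul _ c]
      ring
    · simpa [eval_ballPolynomial] using mul_pos hε (sub_pos.2 (hB z hz))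
  pos_of_pos z hz hpos := by
    have : (1 - c * eval z G) ^ (k + 2) < 1 := pow_lt_one₀ (by linarith [hG1 z hz])
      (by linarith [mul_pos hc hpos]) (by simp)
    have hB0 := sub_pos.2 (hB z hz)
    simp only [cap, map_add, map_sub, map_pow, map_mul, map_one, smul_eval, eval_C,
      eval_ballPolynomial]
    have := sub_pos.2 this
    positivity
  exists_concave := exists_pos_forall_mul_dotProduct_le hS
    (continuous_matrix fun _ _ ↦ continuous_eval _) hcap

theorem exists_isStrictSurrogate (hS : IsCompact S) (hG : ∀ z ∈ S, 0 ≤ eval z G)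
    (hqc : ∀ z ∈ S ∩ ZSet G, StrictlyQuasiconcaveAt G z) :
    ∃ f, IsStrictSurrogate S G f := by
  obtain ⟨B, hB⟩ := hS.bddAbove_image (f := fun z ↦ 1 + z ⬝ᵥ z) (by fun_prop)
  obtain ⟨N, hN⟩ := hS.bddAbove_image (continuous_eval G).continuousOn
  set c := (2 * max N 1)⁻¹
  have : 0 < max N 1 := lt_max_of_lt_right one_pos
  have hc : 0 < c := by positivity
  set B' := max B 1
  have hB' : 0 < B' := lt_max_of_lt_right one_pos
  have hball (z) (hz : z ∈ S) : z ⬝ᵥ z < B' :=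
    (lt_one_add _).trans_le ((hB (Set.mem_image_of_mem _ hz)).trans (le_max_left _ _))
  have hhalf (z) (hz : z ∈ S) : c * eval z G ≤ 1 / 2 := by
    have : eval z G ≤ max N 1 := (hN (Set.mem_image_of_mem _ hz)).trans (le_max_left _ _)
    calc c * eval z G ≤ c * max N 1 := by gcongr
      _ = 1 / 2 := by simp only [c]; field_simp
  have hε : 0 < 1 / (72 * B') := by positivity
  have hεB : 1 / (72 * B') * B' ≤ 1 / 72 := le_of_eq (by field_simp)
  obtain ⟨k, hk, hcap⟩ := exists_cap_hessian_neg (G := C c * G) hS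
    (fun z hz ↦ by simpa using mul_nonneg hc.le (hG z hz)) (by simpa using hhalf)
    (fun z hz ↦ (hqc z ⟨hz.1, by simpa [ZSet, hc.ne'] using hz.2⟩).C_mul hc)
    (fun z hz ↦ (hball z hz).le) hε hεB
  exact ⟨_, isStrictSurrogate_cap hS hG hc hhalf hball hε hεB hk hcap⟩

end StrictSurrogates

section SquareSlack

open Filter Topology

variable {A : Type*} [CommRing A] [Algebra ℝ A] {Q : AddSubmonoid A} {a b e e' N S : A}

/-- The inequality `c a ^ 2 ≤ a` holds modulo `Q` for some `c > 0`, up to an arbitrarily small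
multiple of the error `e`. -/
def HasSquareSlack (Q : AddSubmonoid A) (e a : A) : Prop :=
  ∃ c : ℝ, 0 < c ∧ ∀ ε : ℝ, 0 < ε → a - c • a ^ 2 + ε • e ∈ Q

/-- The conclusion of one improvement step: `a` has square slack, and if `N` is not smaller than
`ε e` then there is even room for an extra multiple of `N ^ 2 - ε N e`. -/
def HasImprovedSlack (Q : AddSubmonoid A) (e N a : A) : Prop :=
  ∃ c : ℝ, 0 < c ∧ ∃ c₁ : ℝ, 0 ≤ c₁ ∧
    ∀ ε : ℝ, 0 < ε → a - c • a ^ 2 - c₁ • (N ^ 2 - ε • (N * e)) ∈ Q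

namespace IsArchimedeanModule

theorem exists_sub_smul_sq_mem (hQ : IsArchimedeanModule Q) (ha : a ∈ Q) :
    ∃ c : ℝ, 0 < c ∧ a - c • a ^ 2 ∈ Q := by
  obtain ⟨N, hN, hNa⟩ := hQ.exists_pos_sub_mem a
  refine ⟨N⁻¹, inv_pos.2 hN, hQ.mem_of_smul_mem (pow_pos hN 2) ?_⟩
  have hN1 : N ^ 2 * N⁻¹ = N := by field_simp
  convert add_mem (hQ.sq_mul_mem (algebraMap ℝ A N - a) ha) (hQ.sq_mul_mem a hNa) using 1
  rw [smul_sub, smul_smul, hN1]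
  algebra

theorem hasSquareSlack_one (hQ : IsArchimedeanModule Q)
    (ha : ∀ χ ∈ positiveCharacters Q, 0 ≤ χ a) : HasSquareSlack Q 1 a := by
  obtain ⟨N, hN, hNa⟩ := hQ.exists_pos_sub_mem a
  refine ⟨N⁻¹, inv_pos.2 hN, fun ε hε ↦ hQ.mem_of_forall_character_pos fun χ hχ ↦ ?_⟩
  have hle : χ a ≤ N := by simpa using hχ _ hNa
  have : N⁻¹ * χ a ^ 2 ≤ χ a := by
    rw [inv_mul_le_iff₀ hN, sq]
    exact mul_le_mul_of_nonneg_right hle (ha χ hχ)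
  simp only [map_add, map_sub, map_smul, map_pow, map_one, smul_eq_mul]
  linarith

end IsArchimedeanModule

namespace HasSquareSlack

theorem eventually (h : HasSquareSlack Q e a) (hQ : IsQuadraticModule Q) :
    ∀ᶠ c : ℝ in 𝓝[>] 0, ∀ ε : ℝ, 0 < ε → a - c • a ^ 2 + ε • e ∈ Q := by
  obtain ⟨c, hc, h⟩ := h
  filter_upwards [Ioo_mem_nhdsGT hc] with c' hc' ε hε
  convert add_mem (h ε hε) (hQ.smul_mem (sub_nonneg.2 hc'.2.le) (hQ.sq_mem a)) using 1
  algebra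

theorem mono (h : HasSquareSlack Q e a) (hQ : IsQuadraticModule Q) (he : e' - e ∈ Q) :
    HasSquareSlack Q e' a := by
  obtain ⟨c, hc, h⟩ := h
  refine ⟨c, hc, fun ε hε ↦ ?_⟩
  convert add_mem (h ε hε) (hQ.smul_mem hε.le he) using 1
  algebra

theorem mem (h : HasSquareSlack Q 0 a) (hQ : IsQuadraticModule Q) : a ∈ Q := by
  obtain ⟨c, hc, h⟩ := h
  simpa using add_mem (h 1 one_pos) (hQ.smul_mem hc.le (hQ.sq_mem a))

end HasSquareSlack

namespace HasImprovedSlack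

theorem of_mem (hQ : IsArchimedeanModule Q) (ha : a ∈ Q) : HasImprovedSlack Q e N a := by
  obtain ⟨c, hc, h⟩ := hQ.exists_sub_smul_sq_mem ha
  exact ⟨c, hc, 0, le_rfl, fun ε _ ↦ by simpa using h⟩

theorem hasSquareSlack_self (h : HasImprovedSlack Q 1 N a) (hQ : IsQuadraticModule Q)
    (hN : N ∈ Q) : HasSquareSlack Q N a := by
  obtain ⟨c, hc, c₁, hc₁, h⟩ := h
  refine ⟨c, hc, fun ε hε ↦ ?_⟩
  set δ := ε / (c₁ + 1)
  have hδ : 0 < δ := by positivity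
  have hδε : ε = c₁ * δ + δ := by
    simp only [δ]
    field_simp
  convert add_mem (h δ hδ) (add_mem (hQ.smul_mem hc₁ (hQ.sq_mem N)) (hQ.smul_mem hδ.le hN)) using 1
  rw [hδε]
  algebra

theorem hasSquareSlack_of_add (h : HasImprovedSlack Q (N + S) N a) (hQ : IsArchimedeanModule Q)
    (hS : IsSumSq S) : HasSquareSlack Q S a := by
  obtain ⟨c, hc, c₁, hc₁, h⟩ := h
  obtain ⟨M, hM, hMN⟩ := hQ.exists_pos_sub_mem N
  have hSQ : S ∈ Q := by simpa using hQ.sumSq_mul_mem hS hQ.one_mem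
  refine ⟨c, hc, fun ε hε ↦ ?_⟩
  set δ := min 1 (ε / ((c₁ + 1) * M))
  have hδ : 0 < δ := by positivity
  have hδε : δ * ((c₁ + 1) * M) ≤ ε := (le_div_iff₀ (by positivity)).1 (min_le_right _ _)
  have hrest : 0 ≤ ε - δ * c₁ * M := by
    have : 0 < δ * M := by positivity
    linarith
  convert add_mem (h δ hδ) (add_mem
    (hQ.smul_mem (mul_nonneg hc₁ (sub_nonneg.2 (min_le_left _ _ : δ ≤ 1))) (hQ.sq_mem N))
    (add_mem (hQ.smul_mem (mul_nonneg hδ.le hc₁) (hQ.sumSq_mul_mem hS hMN))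
      (hQ.smul_mem hrest hSQ))) using 1
  algebra

end HasImprovedSlack

/-- The slack is improved one index at a time: first the constant error is traded for the sum of
all `N l`, then the `N l` are removed from the error one after the other. -/
theorem IsArchimedeanModule.mem_of_forall_hasImprovedSlack {ι κ : Type*} [Finite ι]
    (hQ : IsArchimedeanModule Q) {T : ι → κ → A} {N : ι → A} (hN : ∀ l, IsSumSq (N l))
    (hbase : ∀ l s, HasSquareSlack Q 1 (T l s))
    (hstep : ∀ l, ∀ e ∈ Q, (∀ l' s, HasSquareSlack Q e (T l' s)) →
      ∀ s, HasImprovedSlack Q e (N l) (T l s)) (l : ι) (s : κ) : T l s ∈ Q := by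
  classical
  have hNQ (l : ι) : N l ∈ Q := by simpa using hQ.sumSq_mul_mem (hN l) hQ.one_mem
  suffices ∀ V : Finset ι, ∀ l s, HasSquareSlack Q (∑ i ∈ V, N i) (T l s) by
    simpa using (this ∅ l s).mem hQ.toIsQuadraticModule
  intro V
  induction V using WellFoundedGT.induction with
  | ind V ih =>
    intro l s
    by_cases hl : l ∈ V
    · refine ((hstep l 1 hQ.one_mem hbase s).hasSquareSlack_self hQ.toIsQuadraticModule
        (hNQ l)).mono hQ.toIsQuadraticModule ?_
      rw [← Finset.add_sum_erase V N hl, add_sub_cancel_left]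
      exact sum_mem fun i _ ↦ hNQ i
    · have hins := hstep l _ (sum_mem fun i _ ↦ hNQ i)
        (ih (insert l V) (Finset.ssubset_insert hl)) s
      rw [Finset.sum_insert hl] at hins
      exact hins.hasSquareSlack_of_add hQ (.sum fun i _ ↦ hN i)

end SquareSlack

section SosCurvature

open Filter Topology
open scoped Polynomial
open Polynomial (derivative)

variable {A : Type*} [CommRing A] [Algebra ℝ A] {Q : AddSubmonoid A} {e : A}

theorem IsArchimedeanModule.exists_smul_sum_sq_sub_sq_mem {κ : Type*} (hQ : IsArchimedeanModule Q)
    (s : Finset κ) (p r : κ → A) :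
    ∃ K : ℝ, 0 < K ∧ K • ∑ i ∈ s, p i ^ 2 - (∑ i ∈ s, p i * r i) ^ 2 ∈ Q := by
  classical
  induction s using Finset.induction_on with
  | empty => exact ⟨1, one_pos, by simp⟩
  | insert i s hi ih =>
    obtain ⟨K, hK, h⟩ := ih
    obtain ⟨N, hN, hNr⟩ := hQ.exists_pos_sub_mem (r i ^ 2)
    refine ⟨2 * K + 2 * N, by positivity, ?_⟩
    have hsum : ∑ j ∈ s, p j ^ 2 ∈ Q := sum_mem fun j _ ↦ hQ.sq_mem _
    rw [Finset.sum_insert hi, Finset.sum_insert hi]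
    convert add_mem (add_mem (hQ.smul_mem zero_le_two h)
      (hQ.sq_mem (∑ j ∈ s, p j * r j - p i * r i)))
      (add_mem (hQ.smul_mem zero_le_two (hQ.sq_mul_mem (p i) hNr))
        (add_mem (hQ.smul_mem (mul_nonneg zero_le_two hN.le) hsum)
          (hQ.smul_mem (mul_nonneg zero_le_two hK.le) (hQ.sq_mem (p i))))) using 1
    algebra

variable {ι : Type*} [Fintype ι] {μ ν : NodalMeasure} {D E : ℕ}

theorem NodalMeasure.exists_smul_integral_sq_sub_sq_mem (μ : NodalMeasure)
    (hQ : IsArchimedeanModule Q) (P R : ι → A[X]) :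
    ∃ K : ℝ, 0 < K ∧
      K • μ.integral (∑ i, P i ^ 2) - μ.integral (∑ i, P i * R i) ^ 2 ∈ Q := by
  obtain ⟨K, hK, h⟩ := hQ.exists_smul_sum_sq_sub_sq_mem Finset.univ
    (fun k : μ.ι × ι ↦ √(μ.weight k.1) • (P k.2).eval (algebraMap ℝ A (μ.node k.1)))
    (fun k : μ.ι × ι ↦ √(μ.weight k.1) • (R k.2).eval (algebraMap ℝ A (μ.node k.1)))
  refine ⟨K, hK, ?_⟩
  have hsqrt (k : μ.ι) : √(μ.weight k) * √(μ.weight k) = μ.weight k :=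
    Real.mul_self_sqrt (μ.weight_nonneg k)
  simpa only [NodalMeasure.integral_apply, Polynomial.eval_finsetSum, Finset.smul_sum,
    Fintype.sum_prod_type, smul_pow, sq, smul_mul_smul_comm, hsqrt, Polynomial.eval_mul] using h

theorem NodalMeasure.exists_isSumSq_smul_integral_sum_sub (hν : ν.IsPosDef E) (μ : NodalMeasure) :
    ∃ K : ℝ, 0 < K ∧ ∀ P : ι → A[X], (∀ i, (P i).natDegree ≤ E) →
      IsSumSq (K • ν.integral (∑ i, P i ^ 2) - μ.integral (∑ i, P i ^ 2)) := by
  obtain ⟨K, hK, h⟩ := NodalMeasure.exists_isSumSq_smul_integral_sub (A := A) hν μ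
  refine ⟨K, hK, fun P hP ↦ ?_⟩
  rw [map_sum, map_sum, Finset.smul_sum, ← Finset.sum_sub_distrib]
  exact .sum fun i _ ↦ h (P i) (hP i)

theorem NodalMeasure.exists_integral_sub_smul_mem (ν : NodalMeasure) (hQ : IsQuadraticModule Q)
    {T : ι → A[X]}
    (hT : ∀ i, ∀ s : unitInterval, HasSquareSlack Q e ((T i).eval (algebraMap ℝ A s)))
    (y : ι → A[X]) :
    ∃ c : ℝ, 0 < c ∧ ∀ ε : ℝ, 0 < ε → ν.integral (∑ i, T i * y i ^ 2) -
      c • ν.integral (∑ i, (T i * y i) ^ 2) + ε • (ν.integral (∑ i, y i ^ 2) * e) ∈ Q := by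
  obtain ⟨c, hc, hc0⟩ := ((eventually_all.2 fun k : ι × ν.ι ↦ (hT k.1
    ⟨_, ν.node_mem k.2⟩).eventually hQ).and self_mem_nhdsWithin).exists
  refine ⟨c, hc0, fun ε hε ↦ ?_⟩
  simp only [integral_apply, ← Finset.sum_sub_distrib, ← Finset.sum_add_distrib, Finset.smul_sum,
    Finset.sum_mul]
  refine sum_mem fun k _ ↦ ?_
  set y' : ι → A := fun i ↦ (y i).eval (algebraMap ℝ A (ν.node k))
  set T' : ι → A := fun i ↦ (T i).eval (algebraMap ℝ A (ν.node k))
  have hsum : ∑ i, y' i ^ 2 * (T' i - c • T' i ^ 2 + ε • e) ∈ Q :=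
    sum_mem fun i _ ↦ hQ.sq_mul_mem (y' i) (hc (i, k) ε hε)
  convert hQ.smul_mem (ν.weight_nonneg k) hsum using 1
  simp only [Polynomial.eval_finsetSum, Polynomial.eval_mul, Polynomial.eval_pow,
    Finset.smul_sum, Finset.sum_mul, ← Finset.sum_sub_distrib, ← Finset.sum_add_distrib]
  refine Finset.sum_congr rfl fun i _ ↦ ?_
  simp only [y', T']
  algebra

/-- The polynomial curve `F` is concave on `[0, 1]` with second derivative `-∑ T i * y i ^ 2`, and
an ordinary differential equation for the terms `T i * y i` controls the `y i` by them. -/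
structure IsSosCurvature (Q : AddSubmonoid A) (F : A[X]) (T y v q ρ : ι → A[X]) : Prop where
  neg_derivative : -derivative (derivative F) = ∑ i, T i * y i ^ 2
  derivative_sum : derivative (∑ i, T i * y i * v i) =
    ∑ i, (ρ i * y i ^ 2 - T i * y i * q i)
  exists_pos : ∃ c : ℝ, 0 < c ∧ ∀ i, ∀ s : unitInterval,
    (ρ i).eval (algebraMap ℝ A s) - algebraMap ℝ A c ∈ Q

namespace IsSosCurvature

variable {F : A[X]} {T y v q ρ : ι → A[X]}

/-- Integration by parts against `X * (1 - X)`. -/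
theorem bubble_integral_eq (h : IsSosCurvature Q F T y v q ρ) (hμ : μ.IsQuadrature D)
    (hdeg : (∑ i, T i * y i * v i).natDegree + 2 ≤ D + 1) :
    μ.bubble.integral (∑ i, ρ i * y i ^ 2) = μ.integral (∑ i, T i * y i *
      (Polynomial.X * (1 - Polynomial.X) * q i - (1 - 2 * Polynomial.X) * v i)) := by
  set η := ∑ i, T i * y i * v i with hη
  have hparts : μ.integral (derivative (Polynomial.X * (1 - Polynomial.X) * η)) = 0 := by
    rw [hμ.integral_derivative (by compute_degree; lia)]
    simp
  rw [NodalMeasure.integral_bubble, ← sub_eq_zero, ← map_sub, ← hparts]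
  congr 1
  have hρ : ∑ i, ρ i * y i ^ 2 = derivative η + ∑ i, T i * y i * q i := by
    rw [h.derivative_sum, ← Finset.sum_add_distrib]
    simp
  have hq : ∑ i, T i * y i *
        (Polynomial.X * (1 - Polynomial.X) * q i - (1 - 2 * Polynomial.X) * v i) =
      Polynomial.X * (1 - Polynomial.X) * ∑ i, T i * y i * q i - (1 - 2 * Polynomial.X) * η := by
    simp only [hη, Finset.mul_sum, ← Finset.sum_sub_distrib]
    exact Finset.sum_congr rfl fun i _ ↦ by ring
  rw [hρ, hq]
  simp [Polynomial.derivative_mul]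
  ring

theorem exists_smul_integral_sub_sq_mem (h : IsSosCurvature Q F T y v q ρ)
    (hQ : IsArchimedeanModule Q) (hμ : μ.IsQuadrature D)
    (hdeg : (∑ i, T i * y i * v i).natDegree + 2 ≤ D + 1) :
    ∃ K : ℝ, 0 < K ∧ K • μ.integral (∑ i, (T i * y i) ^ 2) -
      μ.bubble.integral (∑ i, y i ^ 2) ^ 2 ∈ Q := by
  obtain ⟨c, hc, hρ⟩ := h.exists_pos
  obtain ⟨K, hK, hCS⟩ := μ.exists_smul_integral_sq_sub_sq_mem hQ (fun i ↦ T i * y i) fun i ↦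
    Polynomial.X * (1 - Polynomial.X) * q i - (1 - 2 * Polynomial.X) * v i
  rw [← h.bubble_integral_eq hμ hdeg] at hCS
  set N := μ.bubble.integral (∑ i, y i ^ 2) with hN
  set L := μ.bubble.integral (∑ i, ρ i * y i ^ 2) with hL
  have hNsq : IsSumSq N := by
    rw [hN, map_sum]
    exact .sum fun i _ ↦ μ.bubble.isSumSq_integral_sq (y i)
  have hLN : L - c • N ∈ Q := by
    rw [hL, hN, ← algebraMap_smul A c, ← map_smul, ← map_sub]
    refine NodalMeasure.integral_mem hQ.toIsQuadraticModule fun s ↦ ?_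
    simp only [Polynomial.eval_sub, Polynomial.eval_smul, Polynomial.eval_finsetSum,
      smul_eq_mul, Finset.mul_sum, ← Finset.sum_sub_distrib]
    refine sum_mem fun i _ ↦ ?_
    convert hQ.sq_mul_mem ((y i).eval (algebraMap ℝ A s)) (hρ i s) using 1
    simp
    ring
  refine ⟨(c ^ 2)⁻¹ * K, by positivity, hQ.mem_of_smul_mem (pow_pos hc 2) ?_⟩
  have hcc : c ^ 2 * ((c ^ 2)⁻¹ * K) = K := by field_simp
  convert add_mem hCS (add_mem (hQ.sq_mem (L - c • N))
    (hQ.smul_mem (mul_nonneg zero_le_two hc.le) (hQ.sumSq_mul_mem hNsq hLN))) using 1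
  rw [smul_sub, smul_smul, hcc]
  algebra

theorem exists_chord_slack (h : IsSosCurvature Q F T y v q ρ) (hQ : IsArchimedeanModule Q)
    (hμ : μ.IsQuadrature D) (hdeg : (∑ i, T i * y i * v i).natDegree + 2 ≤ D + 1)
    (hE : 2 * E + 2 ≤ D) (hy : ∀ i, (y i).natDegree ≤ E) (hTy : ∀ i, (T i * y i).natDegree ≤ E)
    (he : e ∈ Q) (hT : ∀ i, ∀ s : unitInterval, HasSquareSlack Q e ((T i).eval (algebraMap ℝ A s)))
    {t : unitInterval} (ht : 0 < t) :
    ∃ c : ℝ, 0 < c ∧ ∀ ε : ℝ, 0 < ε → (μ.chord t).integral (∑ i, T i * y i ^ 2) -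
      c • ((μ.chord t).integral (∑ i, T i * y i ^ 2) ^ 2 +
        μ.bubble.integral (∑ i, y i ^ 2) ^ 2) +
      ε • (μ.bubble.integral (∑ i, y i ^ 2) * e) ∈ Q := by
  obtain ⟨K₁, hK₁, hN⟩ := h.exists_smul_integral_sub_sq_mem hQ hμ hdeg
  obtain ⟨K₂, hK₂, hchord⟩ := NodalMeasure.exists_isSumSq_smul_integral_sum_sub (A := A) (ι := ι)
    (hμ.isPosDef_chord (E := E) (by lia) ht) μ
  obtain ⟨K₃, hK₃, hbubble⟩ := NodalMeasure.exists_isSumSq_smul_integral_sum_sub (A := A) (ι := ι)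
    (hμ.isPosDef_bubble hE) (μ.chord t)
  obtain ⟨K₄, hK₄, hG⟩ := (μ.chord t).exists_smul_integral_sq_sub_sq_mem hQ
    (fun i ↦ T i * y i) y
  obtain ⟨c, hc, hslack⟩ := (μ.chord t).exists_integral_sub_smul_mem hQ.toIsQuadraticModule hT y
  obtain ⟨c', hc', rfl⟩ : ∃ c', 0 < c' ∧ c = c' * (K₁ * K₂ + K₄) :=
    ⟨c / (K₁ * K₂ + K₄), by positivity, by field_simp⟩
  refine ⟨c', hc', fun ε hε ↦ ?_⟩
  obtain ⟨ε', hε', rfl⟩ : ∃ ε', 0 < ε' ∧ ε = ε' * K₃ := ⟨ε / K₃, by positivity, by field_simp⟩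
  have hV := hQ.sumSq_mul_mem (hchord _ hTy) hQ.one_mem
  have hNe := hQ.sumSq_mul_mem (hbubble y hy) he
  simp only [mul_assoc, ← sq] at hG
  convert add_mem (add_mem (hslack ε' hε') (hQ.smul_mem hε'.le hNe))
    (add_mem (hQ.smul_mem hc'.le (add_mem hG hN))
      (hQ.smul_mem (mul_nonneg hc'.le hK₁.le) hV)) using 1
  algebra

end IsSosCurvature

theorem HasImprovedSlack.of_chord (hQ : IsArchimedeanModule Q) {a b G N : A} (t : unitInterval)
    (ha : a ∈ Q) (hb : b ∈ Q) {c : ℝ} (hc : 0 < c)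
    (hG : ∀ ε : ℝ, 0 < ε → G - c • (G ^ 2 + N ^ 2) + ε • (N * e) ∈ Q) :
    HasImprovedSlack Q e N ((1 - t : ℝ) • a + (t : ℝ) • b + (t * (1 - t) : ℝ) • G) := by
  obtain ⟨c', hc'0, hc', hac, hbc⟩ : ∃ c' : ℝ, 0 < c' ∧ 2 * c' ≤ c ∧
      a - (2 * c') • a ^ 2 ∈ Q ∧ b - (2 * c') • b ^ 2 ∈ Q := by
    obtain ⟨ca, hca, ha'⟩ := hQ.exists_sub_smul_sq_mem ha
    obtain ⟨cb, hcb, hb'⟩ := hQ.exists_sub_smul_sq_mem hb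
    have hmono {x : A} {r s : ℝ} (hx : x - r • x ^ 2 ∈ Q) (hsr : s ≤ r) : x - s • x ^ 2 ∈ Q := by
      convert add_mem hx (hQ.smul_mem (sub_nonneg.2 hsr) (hQ.sq_mem x)) using 1
      algebra
    refine ⟨min c (min ca cb) / 2, by positivity, ?_, hmono ha' ?_, hmono hb' ?_⟩ <;>
      rw [mul_div_cancel₀ _ two_ne_zero] <;> simp
  have ht0 : (0 : ℝ) ≤ t := t.2.1
  have ht1 : (0 : ℝ) ≤ 1 - t := unitInterval.one_minus_nonneg t
  have hθ : (0 : ℝ) ≤ t * (1 - t) := mul_nonneg ht0 ht1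
  have hθ1 : (t : ℝ) * (1 - t) ≤ 1 := by nlinarith [t.2.2]
  generalize (t : ℝ) = t at *
  refine ⟨c', hc'0, t * (1 - t) * c', by positivity, fun ε hε ↦ ?_⟩
  have hends : (1 - t) • (a - (2 * c') • a ^ 2) + t • (b - (2 * c') • b ^ 2) +
      (2 * c' * (t * (1 - t))) • (a - b) ^ 2 ∈ Q :=
    add_mem (add_mem (hQ.smul_mem ht1 hac) (hQ.smul_mem ht0 hbc))
      (hQ.smul_mem (by positivity) (hQ.sq_mem _))
  have hmiddle : (t * (1 - t)) • (G - c • (G ^ 2 + N ^ 2) + (c' * ε) • (N * e)) +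
      (t * (1 - t) * (c - 2 * c' * (t * (1 - t)))) • G ^ 2 +
      (t * (1 - t) * (c - c')) • N ^ 2 ∈ Q :=
    add_mem (add_mem (hQ.smul_mem hθ (hG _ (by positivity)))
      (hQ.smul_mem (mul_nonneg hθ (by nlinarith)) (hQ.sq_mem G)))
      (hQ.smul_mem (mul_nonneg hθ (by linarith)) (hQ.sq_mem N))
  convert add_mem (add_mem hends hmiddle) (hQ.smul_mem hc'0.le
    (hQ.sq_mem ((1 - t) • a + t • b - (t * (1 - t)) • G))) using 1
  algebra

/-- One improvement step: along a curve whose end values lie in `Q`, square slack of the `T i`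
with error `e` improves that of the curve. -/
theorem IsSosCurvature.exists_hasImprovedSlack {F : A[X]} {T y v q ρ : ι → A[X]}
    (h : IsSosCurvature Q F T y v q ρ) (hQ : IsArchimedeanModule Q)
    (h0 : F.eval 0 ∈ Q) (h1 : F.eval 1 ∈ Q) :
    ∃ N : A, IsSumSq N ∧ ∀ e ∈ Q,
      (∀ i, ∀ s : unitInterval, HasSquareSlack Q e ((T i).eval (algebraMap ℝ A s))) →
      ∀ t : unitInterval, HasImprovedSlack Q e N (F.eval (algebraMap ℝ A t)) := by
  let E := ∑ i, ((y i).natDegree + (T i * y i).natDegree)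
  obtain ⟨μ, hμ⟩ := NodalMeasure.exists_isQuadrature
    (F.natDegree + 2 * E + 2 + (∑ i, T i * y i * v i).natDegree)
  have hE (i : ι) : (y i).natDegree + (T i * y i).natDegree ≤ E :=
    Finset.single_le_sum (f := fun i ↦ (y i).natDegree + (T i * y i).natDegree)
      (fun _ _ ↦ Nat.zero_le _) (Finset.mem_univ i)
  refine ⟨μ.bubble.integral (∑ i, y i ^ 2), ?_, fun e he hT t ↦ ?_⟩
  · rw [map_sum]
    exact .sum fun i _ ↦ μ.bubble.isSumSq_integral_sq (y i)
  rcases eq_or_lt_of_le (show 0 ≤ t from t.2.1) with rfl | ht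
  · exact .of_mem hQ (by simpa using h0)
  rw [hμ.eval_eq_chord (by lia), h.neg_derivative]
  obtain ⟨c, hc, hG⟩ := h.exists_chord_slack hQ hμ (by lia) (E := E) (by lia)
    (fun i ↦ by have := hE i; lia) (fun i ↦ by have := hE i; lia) he hT ht
  exact .of_chord hQ t h0 h1 hc hG

end SosCurvature

section RelativeConcavity

open scoped Polynomial
open Polynomial (derivative)

variable {σ κ A : Type*} [CommRing A] [Algebra ℝ A]

theorem dotProduct_map_sum_smul_vecMulVec_mulVec {R B F : Type*} [Fintype σ] [Fintype κ]
    [CommSemiring R] [CommSemiring B] [FunLike F R B] [RingHomClass F R B] (φ : F) (G : κ → R)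
    (p r : κ → σ → R) (v w : σ → B) :
    v ⬝ᵥ (∑ k, G k • vecMulVec (p k) (r k)).map φ *ᵥ w =
      ∑ k, φ (G k) * ((φ ∘ p k) ⬝ᵥ v) * ((φ ∘ r k) ⬝ᵥ w) := by
  have hmap : (∑ k, G k • vecMulVec (p k) (r k)).map φ =
      ∑ k, φ (G k) • vecMulVec (φ ∘ p k) (φ ∘ r k) := by
    ext a b
    simp [Matrix.sum_apply, vecMulVec_apply]
  rw [hmap, Matrix.sum_mulVec, dotProduct_sum]
  refine Finset.sum_congr rfl fun k _ ↦ ?_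
  rw [smul_mulVec, vecMulVec_mulVec, dotProduct_smul, op_smul_eq_smul, dotProduct_smul,
    dotProduct_comm v, smul_eq_mul, smul_eq_mul]
  ring

/-- Differentiation of polynomials along the vector field `z ↦ x₀ - z`. -/
def radial (x₀ : σ → ℝ) : Derivation ℝ (MvPolynomial σ ℝ) (MvPolynomial σ ℝ) :=
  mkDerivation ℝ fun i ↦ C (x₀ i) - X i

theorem pderiv_radial (x₀ : σ → ℝ) (i : σ) (p : MvPolynomial σ ℝ) :
    pderiv i (radial x₀ p) = radial x₀ (pderiv i p) - pderiv i p := by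
  classical
  have h : ⁅pderiv (R := ℝ) i, radial x₀⁆ = -pderiv i :=
    MvPolynomial.derivation_ext fun k ↦ by
      rw [Derivation.commutator_apply]
      simp [radial, pderiv_X, Pi.single_apply, apply_ite]
  have := DFunLike.congr_fun h p
  rw [Derivation.commutator_apply, Derivation.neg_apply] at this
  linear_combination this

theorem map_radial_sum_smul_vecMulVec [Fintype κ] (x₀ : σ → ℝ) (G : κ → MvPolynomial σ ℝ)
    (P : κ → σ → MvPolynomial σ ℝ) :
    (∑ k, G k • vecMulVec (P k) (P k)).map (radial x₀) =
      ∑ k, radial x₀ (G k) • vecMulVec (P k) (P k) +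
      (∑ k, G k • vecMulVec (radial x₀ ∘ P k) (P k) +
        ∑ k, G k • vecMulVec (P k) (radial x₀ ∘ P k)) := by
  refine Matrix.ext fun i j ↦ ?_
  simp only [map_apply, Matrix.add_apply, Matrix.sum_apply, Matrix.smul_apply, vecMulVec_apply,
    smul_eq_mul, map_sum, Derivation.leibniz, Function.comp_apply, ← Finset.sum_add_distrib]
  exact Finset.sum_congr rfl fun k _ ↦ by ring

theorem radial_apply [Fintype σ] (x₀ : σ → ℝ) (p : MvPolynomial σ ℝ) :
    radial x₀ p = ∑ i, (C (x₀ i) - X i) * pderiv i p :=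
  mkDerivation_eq_sum _ p

theorem derivative_dotProduct_neg_hessian [Fintype σ] (x₀ : σ → ℝ) (u w : σ → A)
    (f : MvPolynomial σ ℝ) :
    derivative ((restrictLine u w ∘ fun i ↦ C (x₀ i) - X i) ⬝ᵥ
      (-hessian f).map (restrictLine u w) *ᵥ (Polynomial.C ∘ w)) =
    (Polynomial.C ∘ w) ⬝ᵥ ((-hessian f).map (radial x₀)).map (restrictLine u w) *ᵥ
        (Polynomial.C ∘ w) -
      (Polynomial.C ∘ w) ⬝ᵥ (-hessian f).map (restrictLine u w) *ᵥ (Polynomial.C ∘ w) := by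
  have hη : (restrictLine u w ∘ fun i ↦ C (x₀ i) - X i) ⬝ᵥ
      (-hessian f).map (restrictLine u w) *ᵥ (Polynomial.C ∘ w) =
      -∑ j, restrictLine u w (radial x₀ (pderiv j f)) * Polynomial.C (w j) := by
    rw [dotProduct_mulVec_eq_sum, Finset.sum_comm, ← Finset.sum_neg_distrib]
    refine Finset.sum_congr rfl fun j _ ↦ ?_
    rw [radial_apply, map_sum, Finset.sum_mul, ← Finset.sum_neg_distrib]
    refine Finset.sum_congr rfl fun i _ ↦ ?_
    simp [hessian]
  rw [hη, dotProduct_mulVec_eq_sum, dotProduct_mulVec_eq_sum, ← Finset.sum_sub_distrib, map_neg,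
    map_sum, ← Finset.sum_neg_distrib]
  simp only [← Finset.sum_sub_distrib, Polynomial.derivative_mul,
    derivative_restrictLine, Polynomial.derivative_C, mul_zero, add_zero, Finset.sum_mul,
    ← Finset.sum_neg_distrib]
  rw [Finset.sum_comm]
  refine Finset.sum_congr rfl fun i _ ↦ Finset.sum_congr rfl fun j _ ↦ ?_
  simp [hessian, pderiv_radial]
  ring

variable {Q : AddSubmonoid A} {S : Set (σ → ℝ)} {u x : σ → A} {f : MvPolynomial σ ℝ}

theorem exists_isSosCurvature_restrictLine [Finite σ] [Fintype κ] {G : κ → MvPolynomial σ ℝ}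
    {P : κ → σ → MvPolynomial σ ℝ} (hf : -hessian f = ∑ k, G k • vecMulVec (P k) (P k)) {c : ℝ}
    (hc : 0 < c) (x₀ : σ → ℝ) (r : ℝ) (hr : ∀ k, ∀ s : unitInterval,
      aeval (AffineMap.lineMap u x (s : ℝ)) (radial x₀ (G k) + C r * G k) - algebraMap ℝ A c ∈ Q) :
    ∃ y v q ρ, IsSosCurvature Q (restrictLine u (x - u) f) (fun k ↦ restrictLine u (x - u) (G k))
      y v q ρ := by
  cases nonempty_fintype σ
  let ℓ := restrictLine u (x - u)
  let w : σ → A[X] := Polynomial.C ∘ (x - u)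
  refine ⟨fun k ↦ (ℓ ∘ P k) ⬝ᵥ w, fun k ↦ (ℓ ∘ P k) ⬝ᵥ (ℓ ∘ fun i ↦ C (x₀ i) - X i),
    fun k ↦ ℓ (C r) * ((ℓ ∘ P k) ⬝ᵥ w) - 2 * ((ℓ ∘ radial x₀ ∘ P k) ⬝ᵥ w) + (ℓ ∘ P k) ⬝ᵥ w,
    fun k ↦ ℓ (radial x₀ (G k) + C r * G k), ?_, ?_, c, hc, fun k s ↦ ?_⟩
  · rw [neg_derivative_derivative_restrictLine, hf, dotProduct_map_sum_smul_vecMulVec_mulVec]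
    exact Finset.sum_congr rfl fun k _ ↦ by ring
  · have hη := derivative_dotProduct_neg_hessian x₀ u (x - u) f
    rw [hf, map_radial_sum_smul_vecMulVec] at hη
    simp only [Matrix.map_add _ (map_add (restrictLine u (x - u))), add_mulVec, dotProduct_add,
      dotProduct_map_sum_smul_vecMulVec_mulVec] at hη
    simp only [mul_right_comm] at hη ⊢
    rw [hη]
    simp only [← Finset.sum_sub_distrib, ← Finset.sum_add_distrib]
    refine Finset.sum_congr rfl fun k _ ↦ ?_
    simp only [map_add, map_mul, ℓ, w]
    ring
  · rw [eval_restrictLine]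
    exact hr k s

variable {ι : Type*} {G : ι → MvPolynomial σ ℝ}

/-- The negated Hessian of `f` lies in the quadratic module of matrix polynomials generated by the
family `G`, written as a sum of rank one terms. -/
def IsSosConcaveOver (G : ι → MvPolynomial σ ℝ) (f : MvPolynomial σ ℝ) : Prop :=
  ∃ (κ : Type) (_ : Fintype κ) (i : κ → ι) (P : κ → σ → MvPolynomial σ ℝ),
    -hessian f = ∑ k, G (i k) • vecMulVec (P k) (P k)

theorem IsSosConcaveOver.exists_hasImprovedSlack [Finite σ] (hf : IsSosConcaveOver G f)
    (hQ : IsArchimedeanModule Q) (hS : IsCompact S) (hconv : Convex ℝ S)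
    (hG : ∀ i, ∀ z ∈ S, 0 ≤ eval z (G i)) {x₀ : σ → ℝ}
    (hx₀ : ∀ i, ∀ z ∈ S, eval z (G i) = 0 → 0 < eval z (radial x₀ (G i)))
    (hu : IsPoint Q S u) (hx : IsPoint Q S x) (hfu : aeval u f ∈ Q) (hfx : aeval x f ∈ Q) :
    ∃ N, IsSumSq N ∧ ∀ e ∈ Q, (∀ i, ∀ s : unitInterval,
        HasSquareSlack Q e (aeval (AffineMap.lineMap u x (s : ℝ)) (G i))) →
      ∀ t : unitInterval, HasImprovedSlack Q e N (aeval (AffineMap.lineMap u x (t : ℝ)) f) := by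
  cases nonempty_fintype σ
  obtain ⟨κ, _, i, P, hP⟩ := hf
  obtain ⟨r, hr, hr0⟩ := ((Filter.eventually_all.2 fun k : κ ↦
    eventually_forall_inv_lt_add_mul hS (continuous_eval (radial x₀ (G (i k)))).continuousOn
      (continuous_eval (G (i k))).continuousOn (hG (i k)) (hx₀ (i k))).and
    (Filter.eventually_gt_atTop 0)).exists
  obtain ⟨y, v, q, ρ, hcurv⟩ := exists_isSosCurvature_restrictLine (Q := Q) (u := u) (x := x) hP
    (inv_pos.2 hr0) x₀ r fun k s ↦ by
      convert (hu.lineMap hconv hx s).aeval_mem hQ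
        (p := radial x₀ (G (i k)) + C r * G (i k) - C r⁻¹)
        fun z hz ↦ by simpa using hr k z hz using 1
      simp
  obtain ⟨N, hN, hstep⟩ := hcurv.exists_hasImprovedSlack hQ
    (by rwa [eval_zero_restrictLine]) (by rwa [eval_one_restrictLine])
  refine ⟨N, hN, fun e he hT t ↦ ?_⟩
  rw [← eval_restrictLine]
  exact hstep e he (fun k s ↦ by rw [eval_restrictLine]; exact hT (i k) s) t

variable [Fintype σ]

namespace IsStrictSurrogate

variable {g : MvPolynomial σ ℝ}

theorem aeval_mem (hf : IsStrictSurrogate S g f) (hQ : IsArchimedeanModule Q)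
    (hx : IsPoint Q S x) (hg : aeval x g ∈ Q) : aeval x f ∈ Q := by
  obtain ⟨s, q, p, hs, rfl, hp⟩ := hf.exists_eq_add
  rw [map_add, map_mul, map_mul, map_pow]
  exact add_mem (hQ.sumSq_mul_mem (isSumSq_map (aeval x) hs) hg)
    (hQ.sq_mul_mem _ (hx.aeval_mem hQ hp))

theorem concaveAlong (hf : IsStrictSurrogate S g f) (hQ : IsArchimedeanModule Q)
    (hconv : Convex ℝ S) (hu : IsPoint Q S u) (hx : IsPoint Q S x) : ConcaveAlong Q f u x := by
  obtain ⟨δ, hδ, hconcave⟩ := hf.exists_concave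
  exact fun s ↦ (hu.lineMap hconv hx s).dotProduct_mulVec_mem hQ (isSymm_hessian f).neg hδ
    hconcave _

theorem aeval_lineMap_mem (hf : IsStrictSurrogate S g f) (hQ : IsArchimedeanModule Q)
    (hconv : Convex ℝ S) (hu : IsPoint Q S u) (hx : IsPoint Q S x) (hgu : aeval u g ∈ Q)
    (hgx : aeval x g ∈ Q) (t : unitInterval) :
    aeval (AffineMap.lineMap u x (t : ℝ)) g ∈ Q := by
  have hmem := (hf.concaveAlong hQ hconv hu hx).chord_mem hQ.toIsQuadraticModule
    (hf.aeval_mem hQ hu hgu) (hf.aeval_mem hQ hx hgx) t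
  obtain ⟨κ, hκ, χ, rfl, hχ⟩ := hf.exists_eq_sub
  refine hQ.mem_of_smul_mem hκ ?_
  convert add_mem hmem (hQ.sq_mul_mem (aeval (AffineMap.lineMap u x (t : ℝ)) g)
    ((hu.lineMap hconv hx t).aeval_mem hQ hχ)) using 1
  simp [Algebra.smul_def]

end IsStrictSurrogate

/-- The concavity hypothesis on a single constraint `g` of the family `G`. -/
def IsConcaveConstraint (S : Set (σ → ℝ)) (G : ι → MvPolynomial σ ℝ) (g : MvPolynomial σ ℝ) :
    Prop :=
  (∃ f, IsStrictSurrogate S g f) ∨ IsSosConcaveOver G g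

theorem aeval_lineMap_mem_of_isConcaveConstraint [Finite ι] (hQ : IsArchimedeanModule Q)
    (hS : IsCompact S) (hconv : Convex ℝ S) (hG : ∀ i, ∀ z ∈ S, 0 ≤ eval z (G i))
    (hconcave : ∀ i, IsConcaveConstraint S G (G i)) {x₀ : σ → ℝ}
    (hx₀ : ∀ i, ∀ z ∈ S, eval z (G i) = 0 → 0 < eval z (radial x₀ (G i)))
    (hu : IsPoint Q S u) (hx : IsPoint Q S x) (hGu : ∀ i, aeval u (G i) ∈ Q)
    (hGx : ∀ i, aeval x (G i) ∈ Q) (i : ι) (t : unitInterval) :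
    aeval (AffineMap.lineMap u x (t : ℝ)) (G i) ∈ Q := by
  have hstep (i : ι) : ∃ N, IsSumSq N ∧ ∀ e ∈ Q, (∀ j, ∀ s : unitInterval,
        HasSquareSlack Q e (aeval (AffineMap.lineMap u x (s : ℝ)) (G j))) →
      ∀ t : unitInterval, HasImprovedSlack Q e N (aeval (AffineMap.lineMap u x (t : ℝ)) (G i)) := by
    rcases hconcave i with ⟨f, hf⟩ | hf
    · exact ⟨0, .zero, fun e _ _ t ↦
        .of_mem hQ (hf.aeval_lineMap_mem hQ hconv hu hx (hGu i) (hGx i) t)⟩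
    · exact hf.exists_hasImprovedSlack hQ hS hconv hG hx₀ hu hx (hGu i) (hGx i)
  choose N hN hstep using hstep
  refine hQ.mem_of_forall_hasImprovedSlack
    (T := fun j (s : unitInterval) ↦ aeval (AffineMap.lineMap u x (s : ℝ)) (G j)) hN
    (fun j s ↦ hQ.hasSquareSlack_one fun χ hχ ↦ ?_) hstep i t
  rw [apply_aeval]
  exact hG j _ (hu.lineMap hconv hx s χ hχ)

/-- A constraint `g` may be replaced, to first order along its zero set, by a polynomial `f` that is
concave along the segment. -/
theorem IsConcaveConstraint.exists_concaveAlong {g : MvPolynomial σ ℝ}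
    (hg : IsConcaveConstraint S G g) (hQ : IsArchimedeanModule Q) (hconv : Convex ℝ S)
    (hu : IsPoint Q S u) (hx : IsPoint Q S x) (hgx : aeval x g ∈ Q)
    (hG : ∀ i, ∀ t : unitInterval, aeval (AffineMap.lineMap u x (t : ℝ)) (G i) ∈ Q) :
    ∃ f, (∃ κ > 0, ∃ χ, f = C κ * g - g ^ 2 * χ) ∧ (∀ z ∈ S, 0 < eval z g → 0 < eval z f) ∧
      ConcaveAlong Q f u x ∧ aeval x f ∈ Q := by
  rcases hg with ⟨f, hf⟩ | ⟨κ, _, i, P, hP⟩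
  · obtain ⟨κ, hκ, χ, hfκ, _⟩ := hf.exists_eq_sub
    exact ⟨f, ⟨κ, hκ, χ, hfκ⟩, hf.pos_of_pos, hf.concaveAlong hQ hconv hu hx,
      hf.aeval_mem hQ hx hgx⟩
  · refine ⟨g, ⟨1, one_pos, 0, by simp⟩, fun _ _ ↦ id, fun t ↦ ?_, hgx⟩
    rw [hP, dotProduct_map_sum_smul_vecMulVec_mulVec]
    refine sum_mem fun k _ ↦ ?_
    rw [mul_assoc, mul_comm, ← sq]
    exact hQ.sq_mul_mem _ (hG (i k) t)

end RelativeConcavity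

section TruncatedModules

variable {n m : ℕ} {g : Fin m → MvPolynomial (Fin n) ℝ} {d e : ℕ}

/-- The truncated quadratic module `M_d(g)` as an additive submonoid. -/
def truncatedModule (d : ℕ) (g : Fin m → MvPolynomial (Fin n) ℝ) :
    AddSubmonoid (MvPolynomial (Fin n) ℝ) :=
  .closure {f | ∃ i p, DegOK d (withOne g i) p ∧ p ^ 2 * withOne g i = f}

theorem coe_truncatedModule (d : ℕ) (g : Fin m → MvPolynomial (Fin n) ℝ) :
    (truncatedModule d g : Set (MvPolynomial (Fin n) ℝ)) = TruncQM d g := by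
  classical
  refine Set.Subset.antisymm (fun f hf ↦ ?_) ?_
  · induction hf using AddSubmonoid.closure_induction with
    | mem f hf =>
      obtain ⟨i, p, hp, rfl⟩ := hf
      refine ⟨1, fun k _ ↦ if k = i then p else 0, fun k _ ↦ ?_, by simp [ite_pow]⟩
      dsimp only
      split_ifs with hk
      exacts [hk ▸ hp, .inl rfl]
    | zero => exact ⟨0, fun _ _ ↦ 0, fun _ _ ↦ .inl rfl, by simp⟩
    | add f f' _ _ hf hf' =>
      obtain ⟨N, p, hp, rfl⟩ := hf
      obtain ⟨N', p', hp', rfl⟩ := hf'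
      refine ⟨N + N', fun i ↦ Fin.append (p i) (p' i), fun i j ↦ ?_, ?_⟩
      · refine Fin.addCases (fun j ↦ ?_) (fun j ↦ ?_) j
        · simpa using hp i j
        · simpa using hp' i j
      · simp [Fin.sum_univ_add, Finset.sum_add_distrib]
  · rintro _ ⟨N, p, hp, rfl⟩
    exact sum_mem fun i _ ↦ sum_mem fun j _ ↦ AddSubmonoid.subset_closure ⟨i, p i j, hp i j, rfl⟩

theorem truncatedModule_mono (hde : d ≤ e) : truncatedModule d g ≤ truncatedModule e g :=
  AddSubmonoid.closure_mono fun _ ⟨i, p, hp, hf⟩ ↦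
    ⟨i, p, hp.imp_right fun h ↦ ⟨h.1, h.2.trans hde⟩, hf⟩

theorem sq_mul_mem_truncatedModule {q f : MvPolynomial (Fin n) ℝ} (hq : q.totalDegree ≤ e)
    (hf : f ∈ truncatedModule d g) : q ^ 2 * f ∈ truncatedModule (2 * e + d) g := by
  induction hf using AddSubmonoid.closure_induction with
  | mem f hf =>
    obtain ⟨i, p, hp, rfl⟩ := hf
    refine AddSubmonoid.subset_closure ⟨i, q * p, ?_, by ring⟩
    rcases hp with rfl | ⟨hi, hp⟩
    · exact .inl (mul_zero q)
    · have := totalDegree_mul q p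
      exact .inr ⟨hi, by omega⟩
  | zero => simp
  | add f f' _ _ hf hf' => simpa only [mul_add] using add_mem hf hf'

theorem smul_mem_truncatedModule {f : MvPolynomial (Fin n) ℝ} {c : ℝ} (hc : 0 ≤ c)
    (hf : f ∈ truncatedModule d g) : c • f ∈ truncatedModule d g := by
  have := sq_mul_mem_truncatedModule (totalDegree_C √c).le hf
  rwa [mul_zero, zero_add, ← map_pow, Real.sq_sqrt hc, ← smul_eq_C_mul] at this

theorem withOne_mem_truncatedModule {i : Fin (m + 1)} (hd : (withOne g i).totalDegree ≤ d) :
    withOne g i ∈ truncatedModule d g := by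
  rcases eq_or_ne (withOne g i) 0 with hi | hi
  · exact hi ▸ zero_mem _
  · exact AddSubmonoid.subset_closure ⟨i, 1, .inr ⟨hi, by simpa using hd⟩, by simp⟩

theorem C_mem_truncatedModule (d : ℕ) (g : Fin m → MvPolynomial (Fin n) ℝ) {c : ℝ} (hc : 0 ≤ c) :
    C c ∈ truncatedModule d g := by
  refine AddSubmonoid.subset_closure ⟨0, C √c, .inr ⟨one_ne_zero, ?_⟩, ?_⟩
  · simp [withOne]
  · simp [withOne, ← map_pow, Real.sq_sqrt hc]

theorem withOne_eval_nonneg {z : Fin n → ℝ} (hz : z ∈ SolSet g) (i : Fin (m + 1)) :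
    0 ≤ eval z (withOne g i) := by
  cases i using Fin.cases with
  | zero => simp [withOne]
  | succ i => simpa [withOne] using hz i

theorem eval_nonneg_of_mem_QM {f : MvPolynomial (Fin n) ℝ} (hf : f ∈ QM g) {z : Fin n → ℝ}
    (hz : z ∈ SolSet g) : 0 ≤ eval z f := by
  obtain ⟨s, hs, rfl⟩ := hf
  rw [map_sum]
  refine Finset.sum_nonneg fun i _ ↦ ?_
  obtain ⟨l, q, hq⟩ := hs i
  rw [map_mul, hq, map_sum]
  exact mul_nonneg (Finset.sum_nonneg fun j _ ↦ by simpa using sq_nonneg _)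
    (withOne_eval_nonneg hz i)

theorem isCompact_solSet (harch : IsArchimedeanQM (QM g)) : IsCompact (SolSet g) := by
  have hclosed : IsClosed (SolSet g) := by
    simp only [SolSet, Set.ofPred_forall]
    exact isClosed_iInter fun i ↦ isClosed_le continuous_const (continuous_eval (g i))
  choose N hN using fun i ↦ harch (X i)
  choose N' hN' using fun i ↦ harch (-X i)
  refine (isCompact_univ_pi fun i ↦ isCompact_Icc (a := -(N' i : ℝ)) (b := N i)).of_isClosed_subset
    hclosed fun z hz i _ ↦ ?_
  have hle := eval_nonneg_of_mem_QM (hN i) hz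
  have hge := eval_nonneg_of_mem_QM (hN' i) hz
  simp only [map_sub, map_natCast, map_neg, eval_X] at hle hge
  constructor <;> linarith

/-- The bivariate polynomials `F(U, X)` for which the specializations `F(u, X)` at the points `u` of
`S(g)` all belong to a common truncation of the quadratic module generated by `g`. -/
def uniformModule (g : Fin m → MvPolynomial (Fin n) ℝ) :
    AddSubmonoid (MvPolynomial (Fin n) (MvPolynomial (Fin n) ℝ)) where
  carrier := {F | ∃ d, ∀ u ∈ SolSet g, map (eval u) F ∈ truncatedModule d g}
  zero_mem' := ⟨0, fun u _ ↦ by simp⟩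
  add_mem' := fun ⟨d, hF⟩ ⟨e, hF'⟩ ↦ ⟨max d e, fun u hu ↦ by
    rw [map_add]
    exact add_mem (truncatedModule_mono (le_max_left d e) (hF u hu))
      (truncatedModule_mono (le_max_right d e) (hF' u hu))⟩

theorem isQuadraticModule_uniformModule (g : Fin m → MvPolynomial (Fin n) ℝ) :
    IsQuadraticModule (uniformModule g) where
  one_mem := ⟨0, fun u _ ↦ by simpa using C_mem_truncatedModule 0 g zero_le_one⟩
  sq_mul_mem q F := fun ⟨d, hF⟩ ↦ ⟨2 * q.totalDegree + d, fun u hu ↦ by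
    rw [map_mul, map_pow]
    exact sq_mul_mem_truncatedModule
      (Finset.sup_mono (support_map_subset (eval u) q)) (hF u hu)⟩

theorem C_mem_uniformModule {p : MvPolynomial (Fin n) ℝ} (hp : ∀ u ∈ SolSet g, 0 ≤ eval u p) :
    C p ∈ uniformModule g :=
  ⟨0, fun u hu ↦ by simpa using C_mem_truncatedModule 0 g (hp u hu)⟩

theorem map_C_withOne_mem_uniformModule (i : Fin (m + 1)) :
    map C (withOne g i) ∈ uniformModule g :=
  ⟨(withOne g i).totalDegree, fun u _ ↦ by
    have hcomp : (eval u).comp C = RingHom.id ℝ := RingHom.ext fun c ↦ eval_C c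
    rw [MvPolynomial.map_map, hcomp, MvPolynomial.map_id]
    exact withOne_mem_truncatedModule le_rfl⟩

theorem map_C_mem_uniformModule {f : MvPolynomial (Fin n) ℝ} (hf : f ∈ QM g) :
    map C f ∈ uniformModule g := by
  obtain ⟨s, hs, rfl⟩ := hf
  rw [map_sum]
  refine sum_mem fun i _ ↦ ?_
  obtain ⟨l, q, hq⟩ := hs i
  rw [map_mul, hq]
  exact (isQuadraticModule_uniformModule g).sumSq_mul_mem
    (isSumSq_map _ (.sum fun j _ ↦ (IsSquare.sq (q j)).isSumSq))
    (map_C_withOne_mem_uniformModule i)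

theorem isArchimedeanModule_uniformModule (harch : IsArchimedeanQM (QM g)) :
    IsArchimedeanModule (uniformModule g) := by
  have hQ := isQuadraticModule_uniformModule g
  refine hQ.isArchimedeanModule_of_boundedElements_eq_top (Algebra.eq_top_iff.2 fun F ↦ ?_)
  induction F using MvPolynomial.induction_on with
  | C p =>
    obtain ⟨N, hN⟩ := ((isCompact_solSet harch).image_of_continuousOn
      (continuous_eval p).continuousOn).isBounded.exists_norm_le
    have hN (u : Fin n → ℝ) (hu : u ∈ SolSet g) : |eval u p| ≤ N := hN _ ⟨u, hu, rfl⟩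
    refine hQ.mem_boundedElements (N := N) (N' := N) ?_ ?_
    · convert C_mem_uniformModule (g := g) (p := C N + p) fun u hu ↦ ?_ using 1
      · simp [MvPolynomial.algebraMap_apply]
      · simpa using neg_le_iff_add_nonneg'.1 (abs_le.1 (hN u hu)).1
    · convert C_mem_uniformModule (g := g) (p := C N - p) fun u hu ↦ ?_ using 1
      · simp [MvPolynomial.algebraMap_apply]
      · simpa using (abs_le.1 (hN u hu)).2
  | add F F' hF hF' => exact add_mem hF hF'
  | mul_X F i hF =>
    refine mul_mem hF ?_
    obtain ⟨N, hN⟩ := harch (X i)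
    obtain ⟨N', hN'⟩ := harch (-X i)
    refine hQ.mem_boundedElements (N := N') (N' := N) ?_ ?_
    · simpa using map_C_mem_uniformModule hN'
    · simpa using map_C_mem_uniformModule hN

end TruncatedModules

section FirstOrderConditions

variable {ι : Type*} {n : ℕ} {S : Set (Fin n → ℝ)} {G : ι → MvPolynomial (Fin n) ℝ}
  {f : MvPolynomial (Fin n) ℝ} {u v : Fin n → ℝ}

theorem exists_forall_dotProduct_pos [Finite ι] {w : ι → Fin n → ℝ}
    (hw : 0 ∉ convexHull ℝ (Set.range w)) : ∃ y, ∀ i, 0 < w i ⬝ᵥ y := by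
  obtain ⟨φ, c, hφ0, hφ⟩ := geometric_hahn_banach_point_closed (convex_convexHull ℝ _)
    (isCompact_convexHull (Set.finite_range w).isCompact).isClosed hw
  rw [map_zero] at hφ0
  refine ⟨fun a ↦ φ (Pi.single a 1), fun i ↦ ?_⟩
  have hφw : φ (w i) = w i ⬝ᵥ fun a ↦ φ (Pi.single a 1) := by
    conv_lhs => rw [pi_eq_sum_univ' (w i)]
    simp [dotProduct]
  rw [← hφw]
  exact hφ0.trans (hφ (w i) (subset_convexHull ℝ _ ⟨i, rfl⟩))

/-- The point `0` is a convex combination of the `w i` and `-v`, in which `-v` has positive weight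
because of `e`. -/
theorem mem_hull_of_forall_dotProduct_nonneg [Finite ι] {w : ι → Fin n → ℝ}
    {e : Fin n → ℝ} (he : ∀ i, 0 < w i ⬝ᵥ e) (hv : ∀ y, (∀ i, 0 < w i ⬝ᵥ y) → 0 ≤ v ⬝ᵥ y) :
    v ∈ PointedCone.hull ℝ (Set.range w) := by
  cases nonempty_fintype ι
  have hzero : 0 ∈ convexHull ℝ (Set.range fun j : Option ι ↦ j.elim (-v) w) := by
    by_contra h
    obtain ⟨y, hy⟩ := exists_forall_dotProduct_pos h
    have hvy : 0 < -v ⬝ᵥ y := hy none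
    rw [neg_dotProduct] at hvy
    linarith [hv y fun i ↦ hy (some i)]
  rw [convexHull_range_eq_image_stdSimplex] at hzero
  obtain ⟨c, ⟨hc, hsum⟩, hcomb⟩ := hzero
  simp only [Fintype.sum_option, Option.elim_none, Option.elim_some] at hsum hcomb
  rw [smul_neg, neg_add_eq_zero] at hcomb
  have hpos : 0 < c none := by
    refine (hc none).lt_of_ne' fun h0 ↦ ?_
    rw [h0, zero_smul] at hcomb
    have hdot : ∑ i, c (some i) * (w i ⬝ᵥ e) = 0 := by
      simpa [sum_dotProduct] using congr_arg (· ⬝ᵥ e) hcomb.symm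
    rw [Finset.sum_eq_zero_iff_of_nonneg fun i _ ↦ mul_nonneg (hc _) (he i).le] at hdot
    have hc0 (i : ι) : c (some i) = 0 :=
      (mul_eq_zero.1 (hdot i (Finset.mem_univ i))).resolve_right (he i).ne'
    simp [h0, hc0] at hsum
  rw [← inv_smul_smul₀ hpos.ne' v, hcomb]
  refine PointedCone.smul_mem _ (inv_nonneg.2 hpos.le) (sum_mem fun i _ ↦ ?_)
  exact PointedCone.smul_mem _ (hc _) (PointedCone.subset_hull ⟨i, rfl⟩)

theorem eventually_eval_pos {p : MvPolynomial (Fin n) ℝ} {y : Fin n → ℝ} (hp : 0 ≤ eval u p)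
    (hy : eval u p = 0 → 0 < gradEval p u ⬝ᵥ y) :
    ∀ᶠ t : ℝ in nhdsWithin 0 (Set.Ioi 0), 0 < eval (u + t • y) p := by
  rcases hp.eq_or_lt' with h0 | hpos
  · have hderiv : HasDerivAt (fun t : ℝ ↦ eval (u + t • y) p) (gradEval p u ⬝ᵥ y) 0 := by
      have h := (restrictLine u y p).hasDerivAt 0
      have heval (q : MvPolynomial (Fin n) ℝ) (t : ℝ) :
          (restrictLine u y q).eval t = eval (u + t • y) q := by
        simpa [AffineMap.lineMap_apply, add_comm, aeval_eq_eval] using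
          eval_restrictLine u (u + y) q t
      simpa only [heval, derivative_restrictLine, Polynomial.eval_finsetSum, Polynomial.eval_mul,
        Polynomial.eval_C, zero_smul, add_zero, gradEval, dotProduct] using h
    filter_upwards [hderiv.tendsto_slope_zero_right.eventually_const_lt (hy h0),
      self_mem_nhdsWithin] with t ht ht0
    simp only [zero_add, zero_smul, add_zero, h0, sub_zero, smul_eq_mul] at ht
    exact (pos_iff_pos_of_mul_pos ht).1 (inv_pos.2 ht0)
  · have hcont : Continuous fun t : ℝ ↦ eval (u + t • y) p :=
      (continuous_eval p).comp (by fun_prop)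
    have hlim := (hcont.tendsto 0).mono_left (nhdsWithin_le_nhds (s := Set.Ioi 0))
    simp only [zero_smul, add_zero] at hlim
    exact hlim.eventually_const_lt hpos

theorem gradEval_dotProduct_nonneg_of_isMinOn [Finite ι] (hu : ∀ i, 0 ≤ eval u (G i))
    (hmin : IsMinOn (fun z ↦ eval z f) {z | ∀ i, 0 ≤ eval z (G i)} u) {y : Fin n → ℝ}
    (hy : ∀ i, eval u (G i) = 0 → 0 < gradEval (G i) u ⬝ᵥ y) : 0 ≤ gradEval f u ⬝ᵥ y := by
  by_contra! hneg
  have hdecrease : ∀ᶠ t : ℝ in nhdsWithin 0 (Set.Ioi 0),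
      0 < eval (u + t • y) (C (eval u f) - f) := by
    refine eventually_eval_pos (by simp) fun _ ↦ ?_
    simpa [gradEval, dotProduct] using hneg
  obtain ⟨t, htG, htf⟩ := ((Filter.eventually_all.2 fun i ↦
    eventually_eval_pos (hu i) (hy i)).and hdecrease).exists
  rw [map_sub, eval_C, sub_pos] at htf
  exact htf.not_ge (hmin fun i ↦ (htG i).le)

/-- The Karush-Kuhn-Tucker conditions, under the Mangasarian-Fromovitz qualification. -/
theorem gradEval_mem_hull_of_isMinOn [Finite ι] (hu : ∀ i, 0 ≤ eval u (G i))
    (hmin : IsMinOn (fun z ↦ eval z f) {z | ∀ i, 0 ≤ eval z (G i)} u) {e : Fin n → ℝ}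
    (he : ∀ i, eval u (G i) = 0 → 0 < gradEval (G i) u ⬝ᵥ e) :
    gradEval f u ∈ PointedCone.hull ℝ
      ((fun i ↦ gradEval (G i) u) '' {i | eval u (G i) = 0}) := by
  rw [Set.image_eq_range]
  exact mem_hull_of_forall_dotProduct_nonneg (fun i ↦ he i i.2) fun y hy ↦
    gradEval_dotProduct_nonneg_of_isMinOn hu hmin fun i hi ↦ hy ⟨i, hi⟩

theorem exists_mem_forall_eval_ne_zero [Finite ι] (hS : (interior S).Nonempty)
    (hG : ∀ i, G i ≠ 0) : ∃ z ∈ S, ∀ i, eval z (G i) ≠ 0 := by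
  cases nonempty_fintype ι
  obtain ⟨z, hz⟩ := hS
  obtain ⟨ε, hε, hball⟩ := Metric.isOpen_iff.1 isOpen_interior z hz
  by_contra! h
  refine Finset.prod_ne_zero_iff.2 (fun i _ ↦ hG i) (funext_set (fun a ↦ Metric.ball (z a) ε)
    (fun a ↦ ?_) (p := ∏ i, G i) fun y hy ↦ ?_)
  · rw [Real.ball_eq_Ioo]
    exact Set.Ioo_infinite (by linarith)
  · obtain ⟨i, hi⟩ := h y (interior_subset (hball (by rwa [ball_pi z hε])))
    rw [map_prod, map_zero]
    exact Finset.prod_eq_zero (Finset.mem_univ i) hi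

/-- The affine polynomial `⟨v, X - u⟩`, as a linear function of `v`. -/
def affineForm (u : Fin n → ℝ) : (Fin n → ℝ) →ₗ[ℝ] MvPolynomial (Fin n) ℝ :=
  Fintype.linearCombination ℝ fun i ↦ X i - C (u i)

theorem affineForm_apply (u v : Fin n → ℝ) :
    affineForm u v = ∑ i, C (v i) * (X i - C (u i)) := by
  simp [affineForm, Fintype.linearCombination_apply, smul_eq_C_mul]

theorem eq_C_add_affineForm_gradEval (hf : f.totalDegree ≤ 1)
    (u : Fin n → ℝ) : f = C (eval u f) + affineForm u (gradEval f u) := by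
  rw [← mem_restrictTotalDegree, restrictTotalDegree, restrictSupport_eq_span] at hf
  induction hf using Submodule.span_induction with
  | mem f hf =>
    obtain ⟨s, hs, rfl⟩ := hf
    rcases Nat.le_one_iff_eq_zero_or_eq_one.1 hs with h0 | h1
    · obtain rfl : s = 0 := (Finsupp.degree_eq_zero_iff s).1 h0
      change 1 = C (eval u 1) + affineForm u (gradEval 1 u)
      simp [affineForm_apply, gradEval]
    · obtain ⟨a, rfl⟩ := (Finsupp.sum_eq_one_iff s).1 h1
      change X a = C (eval u (X a)) + affineForm u (gradEval (X a) u)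
      simp [affineForm_apply, gradEval, pderiv_X, Pi.single_apply]
  | zero => simp [affineForm_apply, gradEval]
  | add f f' _ _ hf hf' =>
    conv_lhs => rw [hf, hf']
    simp [affineForm_apply, gradEval, add_mul, Finset.sum_add_distrib]
    ring
  | smul c f _ hf =>
    conv_lhs => rw [hf]
    simp [affineForm_apply, gradEval, smul_eq_C_mul, Finset.mul_sum, mul_assoc]

end FirstOrderConditions

section TangentInequalities

variable {n m : ℕ} {ι : Type*} {S : Set (Fin n → ℝ)} {G : ι → MvPolynomial (Fin n) ℝ}
  {f p : MvPolynomial (Fin n) ℝ} {x₀ z : Fin n → ℝ}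

theorem eval_radial (x₀ z : Fin n → ℝ) (p : MvPolynomial (Fin n) ℝ) :
    eval z (radial x₀ p) = gradEval p z ⬝ᵥ (x₀ - z) := by
  simp [radial_apply, gradEval, dotProduct, mul_comm]

theorem gradEval_C_mul_sub_sq_mul {κ : ℝ} {χ : MvPolynomial (Fin n) ℝ} (hz : eval z p = 0) :
    gradEval (C κ * p - p ^ 2 * χ) z = κ • gradEval p z := by
  ext i
  simp [gradEval, hz]

theorem isArchimedeanModule_nonneg : IsArchimedeanModule (AddSubmonoid.nonneg ℝ) where
  one_mem := zero_le_one (α := ℝ)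
  sq_mul_mem q _ ha := mul_nonneg (sq_nonneg q) ha
  exists_sub_mem a := ⟨a, by simp⟩

theorem isPoint_nonneg (hz : z ∈ S) : IsPoint (AddSubmonoid.nonneg ℝ) S z := fun χ _ ↦ by
  rwa [Subsingleton.elim χ (AlgHom.id ℝ ℝ)]

theorem IsConcaveConstraint.eval_radial_pos (hp : IsConcaveConstraint S G p) (hconv : Convex ℝ S)
    (hG : ∀ i, ∀ z ∈ S, 0 ≤ eval z (G i)) (hx₀ : x₀ ∈ S) (hpos : 0 < eval x₀ p) (hz : z ∈ S)
    (hpz : eval z p = 0) : 0 < eval z (radial x₀ p) := by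
  obtain ⟨f, ⟨κ, hκ, χ, rfl⟩, hfpos, hf, -⟩ := hp.exists_concaveAlong isArchimedeanModule_nonneg
    hconv (isPoint_nonneg hz) (isPoint_nonneg hx₀) (by simpa [aeval_eq_eval] using hpos.le)
    fun i t ↦ hG i _ (hconv.lineMap_mem hz hx₀ t.2)
  have htangent := hf.tangent_mem isArchimedeanModule_nonneg.toIsQuadraticModule
  have hκpos : 0 < κ * eval z (radial x₀ p) := by
    rw [eval_radial, ← smul_eq_mul, ← smul_dotProduct, ← gradEval_C_mul_sub_sq_mul (χ := χ) hpz]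
    refine (hfpos x₀ hx₀ hpos).trans_le ?_
    simpa [aeval_eq_eval, hpz, dotProduct, gradEval] using htangent
  exact (pos_iff_pos_of_mul_pos hκpos).1 hκ

variable {g : Fin m → MvPolynomial (Fin n) ℝ}

/-- The generators `1, g₁, …, g_m` of the quadratic module, without those that vanish. -/
def nonzeroGenerators (g : Fin m → MvPolynomial (Fin n) ℝ) :
    {i // withOne g i ≠ 0} → MvPolynomial (Fin n) ℝ :=
  fun i ↦ withOne g i

theorem mem_solSet_iff : z ∈ SolSet g ↔ ∀ i, 0 ≤ eval z (nonzeroGenerators g i) := by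
  refine ⟨fun hz i ↦ withOne_eval_nonneg hz i, fun hz i ↦ ?_⟩
  rcases eq_or_ne (g i) 0 with h0 | h0
  · simp [h0]
  · exact hz ⟨i.succ, h0⟩

theorem transpose_mul_self_eq_sum_vecMulVec {R l k : Type*} [Fintype l] [CommSemiring R]
    (P : Matrix l k R) : Pᵀ * P = ∑ r, vecMulVec (P r) (P r) := by
  ext a b
  simp [Matrix.mul_apply, Matrix.sum_apply, vecMulVec_apply]

theorem SosConcave.isSosConcaveOver (hp : SosConcave g p) :
    IsSosConcaveOver (nonzeroGenerators g) p := by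
  obtain ⟨_, N, P, -, hP⟩ := hp
  refine ⟨{i // withOne g i ≠ 0} × Fin N × Fin n, inferInstance, Prod.fst,
    fun k ↦ P k.1 k.2.1 k.2.2, ?_⟩
  have hneg : -hessian p = ∑ i, ∑ j, withOne g i • ((P i j)ᵀ * P i j) := hP
  rw [hneg, Fintype.sum_prod_type, ← Finset.sum_filter_of_ne (p := fun i ↦ withOne g i ≠ 0) fun
    i _ hi h0 ↦ hi (by simp [h0])]
  rw [Finset.sum_subtype (p := fun i ↦ withOne g i ≠ 0) _ (by simp)]
  refine Finset.sum_congr rfl fun i _ ↦ ?_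
  simp only [Fintype.sum_prod_type, transpose_mul_self_eq_sum_vecMulVec, Finset.smul_sum,
    nonzeroGenerators]

theorem isConcaveConstraint_nonzeroGenerators (hS : IsCompact (SolSet g))
    (hg : ∀ i, (∀ z ∈ SolSet g ∩ ZSet (g i), StrictlyQuasiconcaveAt (g i) z) ∨ SosConcave g (g i))
    (i : {i // withOne g i ≠ 0}) :
    IsConcaveConstraint (SolSet g) (nonzeroGenerators g) (nonzeroGenerators g i) := by
  obtain ⟨i, hi⟩ := i
  cases i using Fin.cases with
  | zero =>
    refine .inr ⟨Empty, inferInstance, Empty.elim, Empty.elim, ?_⟩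
    ext a b
    simp [nonzeroGenerators, withOne, hessian]
  | succ i =>
    rcases hg i with hqc | hsos
    · exact .inl (exists_isStrictSurrogate hS (fun z hz ↦ hz i) hqc)
    · exact .inr hsos.isSosConcaveOver

theorem aeval_C_X {σ : Type*} (p : MvPolynomial σ ℝ) :
    aeval (fun i ↦ (C (X i) : MvPolynomial σ (MvPolynomial σ ℝ))) p = C p := by
  have h : aeval (fun i ↦ (C (X i) : MvPolynomial σ (MvPolynomial σ ℝ))) =
      Algebra.algHom ℝ (MvPolynomial σ ℝ) (MvPolynomial σ (MvPolynomial σ ℝ)) :=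
    MvPolynomial.algHom_ext fun i ↦ aeval_X _ i
  exact DFunLike.congr_fun h p

theorem aeval_X_eq_map_C {σ : Type*} (p : MvPolynomial σ ℝ) :
    aeval (X : σ → MvPolynomial σ (MvPolynomial σ ℝ)) p = map C p := by
  induction p using MvPolynomial.induction_on with
  | C r => simp [MvPolynomial.algebraMap_apply]
  | add p q hp hq => rw [map_add, map_add, hp, hq]
  | mul_X p i hp => rw [map_mul, map_mul, hp, aeval_X, map_X]

theorem isPoint_C_X (g : Fin m → MvPolynomial (Fin n) ℝ) :
    IsPoint (uniformModule g) (SolSet g) fun i ↦ C (X i) := fun χ hχ i ↦ by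
  rw [← apply_aeval, aeval_C_X]
  exact hχ _ (C_mem_uniformModule fun u hu ↦ hu i)

theorem isPoint_X (g : Fin m → MvPolynomial (Fin n) ℝ) :
    IsPoint (uniformModule g) (SolSet g) X := fun χ hχ i ↦ by
  rw [← apply_aeval, aeval_X_eq_map_C]
  exact hχ _ (map_C_withOne_mem_uniformModule i.succ)

theorem map_eval_sum_C_mul (u : Fin n → ℝ) (f : MvPolynomial (Fin n) ℝ) :
    map (eval u) (∑ i, C (pderiv i f) * (X i - C (X i))) = affineForm u (gradEval f u) := by
  simp [affineForm_apply, gradEval]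

theorem exists_affineForm_gradEval_mem_truncatedModule (hconv : Convex ℝ (SolSet g))
    (harch : IsArchimedeanQM (QM g)) (hG : ∀ i, IsConcaveConstraint (SolSet g)
      (nonzeroGenerators g) (nonzeroGenerators g i))
    (hx₀ : ∀ i, ∀ z ∈ SolSet g, eval z (nonzeroGenerators g i) = 0 →
      0 < eval z (radial x₀ (nonzeroGenerators g i))) (i : {i // withOne g i ≠ 0}) :
    ∃ d, ∀ u ∈ SolSet g, eval u (nonzeroGenerators g i) = 0 →
      affineForm u (gradEval (nonzeroGenerators g i) u) ∈ truncatedModule d g := by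
  have hQ := isArchimedeanModule_uniformModule harch
  have hX (j : {i // withOne g i ≠ 0}) : aeval X (nonzeroGenerators g j) ∈ uniformModule g :=
    aeval_X_eq_map_C (nonzeroGenerators g j) ▸ map_C_withOne_mem_uniformModule j.1
  have hsegment := aeval_lineMap_mem_of_isConcaveConstraint hQ (isCompact_solSet harch) hconv
    (fun j z hz ↦ mem_solSet_iff.1 hz j) hG hx₀ (isPoint_C_X g) (isPoint_X g)
    (fun j ↦ by
      rw [aeval_C_X]
      exact C_mem_uniformModule fun u hu ↦ mem_solSet_iff.1 hu j) hX
  obtain ⟨f, ⟨κ, hκ, χ, rfl⟩, -, hconcave, hfX⟩ := (hG i).exists_concaveAlong hQ hconv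
    (isPoint_C_X g) (isPoint_X g) (hX i) hsegment
  obtain ⟨d, hd⟩ := add_mem (hconcave.tangent_mem hQ.toIsQuadraticModule) hfX
  refine ⟨d, fun u hu hiu ↦ ?_⟩
  have htangent := hd u hu
  simp only [sub_add_cancel, aeval_C_X, map_add, map_eval_sum_C_mul,
    gradEval_C_mul_sub_sq_mul hiu, map_smul, map_C] at htangent
  simpa [hiu, hκ.ne'] using smul_mem_truncatedModule (inv_nonneg.2 hκ.le) htangent

theorem affineForm_mem_truncatedModule_of_mem_hull {d : ℕ} {u v : Fin n → ℝ} {s : Set (Fin n → ℝ)}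
    (hs : ∀ w ∈ s, affineForm u w ∈ truncatedModule d g) (hv : v ∈ PointedCone.hull ℝ s) :
    affineForm u v ∈ truncatedModule d g := by
  induction hv using Submodule.span_induction with
  | mem w hw => exact hs w hw
  | zero => simp
  | add v w _ _ hv hw => simpa using add_mem hv hw
  | smul c v _ hv =>
    rw [← Nonneg.coe_smul, map_smul]
    exact smul_mem_truncatedModule c.2 hv

end TangentInequalities

theorem stmt_13 {n m : ℕ} (g : Fin m → MvPolynomial (Fin n) ℝ)
    (hconv : Convex ℝ (SolSet g)) (hint : (interior (SolSet g)).Nonempty)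
    (harch : IsArchimedeanQM (QM g))
    (hg : ∀ i, (∀ x ∈ SolSet g ∩ ZSet (g i), StrictlyQuasiconcaveAt (g i) x) ∨
      SosConcave g (g i)) :
    ∃ d : ℕ, ∀ f : MvPolynomial (Fin n) ℝ, f.totalDegree ≤ 1 →
      (∀ x ∈ SolSet g, 0 ≤ eval x f) → f ∈ TruncQM d g := by
  have hS := isCompact_solSet harch
  have hG := isConcaveConstraint_nonzeroGenerators hS hg
  have hG_nonneg (i) (z) (hz : z ∈ SolSet g) := mem_solSet_iff.1 hz i
  obtain ⟨x₀, hx₀, hx₀_ne⟩ := exists_mem_forall_eval_ne_zero (G := nonzeroGenerators g) hint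
    Subtype.property
  have hx₀_pos (i) := (hG_nonneg i x₀ hx₀).lt_of_ne' (hx₀_ne i)
  have hradial (i) (z) (hz : z ∈ SolSet g) :=
    (hG i).eval_radial_pos hconv hG_nonneg hx₀ (hx₀_pos i) hz
  choose d htangent using exists_affineForm_gradEval_mem_truncatedModule hconv harch hG hradial
  refine ⟨Finset.univ.sup d, fun f hf hf_nonneg ↦ ?_⟩
  obtain ⟨u, hu, hmin⟩ := hS.exists_isMinOn ⟨x₀, hx₀⟩ (continuous_eval f).continuousOn
  rw [← coe_truncatedModule, SetLike.mem_coe, eq_C_add_affineForm_gradEval hf u]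
  refine add_mem (C_mem_truncatedModule _ g (hf_nonneg u hu)) ?_
  refine affineForm_mem_truncatedModule_of_mem_hull ?_ <| gradEval_mem_hull_of_isMinOn
    (fun i ↦ hG_nonneg i u hu) (hmin.on_subset fun z hz ↦ mem_solSet_iff.2 hz)
    fun i hi ↦ eval_radial x₀ u _ ▸ hradial i u hu hi
  rintro _ ⟨i, hi, rfl⟩
  exact truncatedModule_mono (Finset.le_sup (Finset.mem_univ i)) (htangent i u hu hi)
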